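/- arXiv:1603.07876 — 5 statements merged into one kernel-verified Lean document; each statement's English description precedes it below -/
import Mathlib

section
/- Let k be a field and C a k-linear abelian category, and let A be an object of C with Hom(A,A) and Ext^2(A,A) one-dimensional over k and Ext^i(A,A) = 0 for all i ≥ 1 with i ≠ 2. Then the full subcategory of D^b(C) consisting of objects B with H^i(B) ≅ A^{d_i} for some d_i ∈ ℕ (all i ∈ ℤ, with d_i = 0 for all but finitely many i) has only countably many isomorphism classes: there exists a sequence (B_m)_{m∈ℕ} of objects of D^b(C) such that every such B is isomorphic to B_m for some m. (Proposition 3.6, countability part.) -/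
open CategoryTheory Limits

attribute [local instance] CategoryTheory.Abelian.hasFiniteBiproducts

namespace ThreeCusps

variable (k : Type*) [Field k]
variable {C : Type*} [Category C] [Abelian C] [CategoryTheory.Linear k C]
  [HasDerivedCategory C]

/-- `Hom(A[0], Y)` is one-dimensional over `k`:  it is spanned by a nonzero element `e`,
where the `k`-action on `Hom((single A), Y)` is induced by precomposition with the scalar
endomorphisms `c • 𝟙 A` of `A` (this is the `k`-linear structure of the derived category
of the `k`-linear category `C`). -/
def HomIsLine (A : C) (Y : DerivedCategory C) : Prop :=
  ∃ e : (DerivedCategory.singleFunctor C 0).obj A ⟶ Y, e ≠ 0 ∧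
    ∀ φ : (DerivedCategory.singleFunctor C 0).obj A ⟶ Y,
      ∃ c : k, φ = (DerivedCategory.singleFunctor C 0).map (c • 𝟙 A) ≫ e

/-- The hypotheses (3.3) on the object `A` of the `k`-linear abelian category `C`:
`Hom(A,A)` and `Ext²(A,A)` are one-dimensional over `k` and `Extⁱ(A,A) = 0` for every
`i ≥ 1` with `i ≠ 2`, where `Extⁱ(A,A) = Hom_{D(C)}(A, A[i])`. -/
def GoodBase (A : C) : Prop :=
  Module.finrank k (A ⟶ A) = 1 ∧
  HomIsLine k A (((DerivedCategory.singleFunctor C 0).obj A)⟦(2 : ℤ)⟧) ∧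
  ∀ i : ℕ, 1 ≤ i → i ≠ 2 →
    ∀ φ : (DerivedCategory.singleFunctor C 0).obj A ⟶
        ((DerivedCategory.singleFunctor C 0).obj A)⟦(i : ℤ)⟧, φ = 0

/-- `X` is an object of type `Aₙ` of the (bounded) derived category of `C`:
`Hⁱ(X) ≅ A` for `0 ≤ i ≤ n`, `Hⁱ(X) = 0` otherwise, and `Hom_{D(C)}(A, X[j])` is
one-dimensional over `k` for `j ∈ {0, n+2}` and vanishes for every other `j ∈ ℤ`. -/
def IsTypeA (A : C) (n : ℕ) (X : DerivedCategory C) : Prop :=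
  (∀ i : ℤ, 0 ≤ i → i ≤ (n : ℤ) →
    Nonempty ((DerivedCategory.homologyFunctor C i).obj X ≅ A)) ∧
  (∀ i : ℤ, (i < 0 ∨ (n : ℤ) < i) →
    IsZero ((DerivedCategory.homologyFunctor C i).obj X)) ∧
  (∀ j : ℤ, (j = 0 ∨ j = (n : ℤ) + 2) → HomIsLine k A (X⟦j⟧)) ∧
  (∀ j : ℤ, j ≠ 0 → j ≠ (n : ℤ) + 2 →
    ∀ φ : (DerivedCategory.singleFunctor C 0).obj A ⟶ X⟦j⟧, φ = 0)

/-!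
The truncations `⋯ ⟶ τ≤(b-2) X ⟶ τ≤(b-1) X ⟶ τ≤b X` form a tower whose layers are shifted powers
`A^d[-n]`. Consecutive layers are glued by an element of `Ext²(A^d, A^d')`, i.e. by a linear map
`k^d → k^d'`, and since all higher `Ext` groups vanish there is nothing else to glue: an isomorphism
between the sequences of linear maps attached to two objects lifts, one layer at a time, to an
isomorphism between the objects.

The composite of two consecutive maps need not vanish, so these sequences are arbitrary bounded
representations of the equioriented quiver of type `A`. They are classified by the ranks of all
composites, i.e. by finitely many natural numbers, whence countability. Isomorphic sequences are
matched vertex by vertex: an isomorphism preserving the flags of kernels at one vertex is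
transported to the next vertex and extended there to an isomorphism preserving the flags.
-/

section Flag

variable {k}
variable {E E' U : Type*} [AddCommGroup E] [Module k E] [AddCommGroup E'] [Module k E']
  [AddCommGroup U] [Module k U]

/-- A linear relation `R ⊆ E × E'` is compatible with the flags `F` and `F'` when related vectors
have the same position in their flags; flag-preserving isomorphisms arise as maximal such `R`. -/
def FlagCompatible (F : ℕ → Submodule k E) (F' : ℕ → Submodule k E')
    (R : Submodule k (E × E')) : Prop :=
  ∀ x ∈ R, ∀ j, x.1 ∈ F j ↔ x.2 ∈ F' j

lemma le_map_iff_finrank_inf_comap_eq [FiniteDimensional k U] {f : E →ₗ[k] U}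
    {R : Submodule k E} (hf : Disjoint R (LinearMap.ker f)) (G : Submodule k U) :
    G ≤ R.map f ↔ Module.finrank k (R ⊓ G.comap f : Submodule k E) = Module.finrank k G := by
  have map_eq : (R ⊓ G.comap f).map f = R.map f ⊓ G := by
    ext x
    simp only [Submodule.mem_map, Submodule.mem_inf, Submodule.mem_comap]
    grind
  have finrank_eq : Module.finrank k (R ⊓ G.comap f : Submodule k E)
      = Module.finrank k (R.map f ⊓ G : Submodule k U) := by
    rw [← map_eq]
    exact ((f.domRestrict _).finrank_range_of_inj
      (LinearMap.injective_domRestrict_iff.mpr (hf.mono_left inf_le_left))).symm.trans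
        (by rw [LinearMap.range_domRestrict])
  rw [finrank_eq, ← inf_eq_right]
  exact ⟨fun h ↦ by rw [h], Submodule.eq_of_le_of_finrank_eq inf_le_right⟩

namespace FlagCompatible

variable {F : ℕ → Submodule k E} {F' : ℕ → Submodule k E'} {R : Submodule k (E × E')}

lemma disjoint_ker_fst (hR : FlagCompatible F F' R) (h₀ : F 0 = ⊥) (h₀' : F' 0 = ⊥) :
    Disjoint R (LinearMap.ker (LinearMap.fst k E E')) := by
  refine Submodule.disjoint_def.mpr fun x hx hx₁ ↦ Prod.ext hx₁ ?_
  have := hR x hx 0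
  simp_all

lemma disjoint_ker_snd (hR : FlagCompatible F F' R) (h₀ : F 0 = ⊥) (h₀' : F' 0 = ⊥) :
    Disjoint R (LinearMap.ker (LinearMap.snd k E E')) := by
  refine Submodule.disjoint_def.mpr fun x hx hx₂ ↦ Prod.ext ?_ hx₂
  have := hR x hx 0
  simp_all

lemma le_map_fst_iff_le_map_snd [FiniteDimensional k E] [FiniteDimensional k E']
    (hR : FlagCompatible F F' R) (h₀ : F 0 = ⊥) (h₀' : F' 0 = ⊥) {n : ℕ}
    (hn : Module.finrank k (F n) = Module.finrank k (F' n)) :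
    F n ≤ R.map (LinearMap.fst k E E') ↔ F' n ≤ R.map (LinearMap.snd k E E') := by
  have inf_eq : R ⊓ (F n).comap (LinearMap.fst k E E')
      = R ⊓ (F' n).comap (LinearMap.snd k E E') := by
    ext x
    exact and_congr_right fun hx ↦ hR x hx n
  rw [le_map_iff_finrank_inf_comap_eq (hR.disjoint_ker_fst h₀ h₀'),
    le_map_iff_finrank_inf_comap_eq (hR.disjoint_ker_snd h₀ h₀'), inf_eq, hn]

lemma sup_span_singleton (hR : FlagCompatible F F' R) (hF : Monotone F) (hF' : Monotone F')
    {n : ℕ} {v : E} {v' : E'}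
    (hv : v ∈ F (n + 1)) (hvR : v ∉ R.map (LinearMap.fst k E E'))
    (hv' : v' ∈ F' (n + 1)) (hvR' : v' ∉ R.map (LinearMap.snd k E E'))
    (hn : F n ≤ R.map (LinearMap.fst k E E')) (hn' : F' n ≤ R.map (LinearMap.snd k E E')) :
    FlagCompatible F F' (R ⊔ k ∙ (v, v')) := by
  intro x hx j
  obtain ⟨r, hr, _, hs, rfl⟩ := Submodule.mem_sup.mp hx
  obtain ⟨c, rfl⟩ := Submodule.mem_span_singleton.mp hs
  rcases eq_or_ne c 0 with rfl | hc
  · simpa using hR r hr j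
  rcases Nat.lt_or_ge n j with hj | hj
  · rw [Prod.fst_add, Prod.snd_add, Prod.smul_fst, Prod.smul_snd,
      Submodule.add_mem_iff_left _ ((F j).smul_mem c (hF hj hv)),
      Submodule.add_mem_iff_left _ ((F' j).smul_mem c (hF' hj hv'))]
    exact hR r hr j
  · refine iff_of_false (fun h ↦ hvR ?_) (fun h ↦ hvR' ?_)
    · rw [← Submodule.smul_mem_iff _ hc,
        ← Submodule.add_mem_iff_right _ (Submodule.mem_map_of_mem hr)]
      exact hn (hF hj h)
    · rw [← Submodule.smul_mem_iff _ hc,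
        ← Submodule.add_mem_iff_right _ (Submodule.mem_map_of_mem hr)]
      exact hn' (hF' hj h)

lemma le_map_fst_of_maximal [FiniteDimensional k E] [FiniteDimensional k E']
    (hR : Maximal (FlagCompatible F F') R) (hF : Monotone F) (hF' : Monotone F')
    (h₀ : F 0 = ⊥) (h₀' : F' 0 = ⊥)
    (hrank : ∀ j, Module.finrank k (F j) = Module.finrank k (F' j)) (n : ℕ) :
    F n ≤ R.map (LinearMap.fst k E E') := by
  induction n with
  | zero => simp [h₀]
  | succ n ih =>
    by_contra h
    obtain ⟨v, hv, hvR⟩ := SetLike.not_le_iff_exists.mp h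
    obtain ⟨v', hv', hvR'⟩ := SetLike.not_le_iff_exists.mp
      (mt (hR.prop.le_map_fst_iff_le_map_snd h₀ h₀' (hrank (n + 1))).mpr h)
    have ih' := (hR.prop.le_map_fst_iff_le_map_snd h₀ h₀' (hrank n)).mp ih
    have le : R ⊔ k ∙ (v, v') ≤ R :=
      hR.le_of_ge (hR.prop.sup_span_singleton hF hF' hv hvR hv' hvR' ih ih') le_sup_left
    exact hvR ⟨(v, v'), le (Submodule.mem_sup_right (Submodule.mem_span_singleton_self _)), rfl⟩

lemma exists_linearEquiv (hR : FlagCompatible F F' R) (h₀ : F 0 = ⊥) (h₀' : F' 0 = ⊥)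
    (h₁ : R.map (LinearMap.fst k E E') = ⊤) (h₂ : R.map (LinearMap.snd k E E') = ⊤) :
    ∃ e : E ≃ₗ[k] E', ∀ x ∈ R, e x.1 = x.2 := by
  let p₁ : R ≃ₗ[k] E := .ofBijective ((LinearMap.fst k E E').domRestrict R)
    ⟨LinearMap.injective_domRestrict_iff.mpr (hR.disjoint_ker_fst h₀ h₀'),
      LinearMap.range_eq_top.mp (by rw [LinearMap.range_domRestrict, h₁])⟩
  let p₂ : R ≃ₗ[k] E' := .ofBijective ((LinearMap.snd k E E').domRestrict R)
    ⟨LinearMap.injective_domRestrict_iff.mpr (hR.disjoint_ker_snd h₀ h₀'),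
      LinearMap.range_eq_top.mp (by rw [LinearMap.range_domRestrict, h₂])⟩
  exact ⟨p₁.symm.trans p₂, fun x hx ↦ congrArg p₂ (p₁.symm_apply_apply ⟨x, hx⟩)⟩

end FlagCompatible

theorem exists_linearEquiv_extend_flag [FiniteDimensional k E] [FiniteDimensional k E']
    {F : ℕ → Submodule k E} {F' : ℕ → Submodule k E'} (hF : Monotone F) (hF' : Monotone F')
    (h₀ : F 0 = ⊥) (h₀' : F' 0 = ⊥) {N : ℕ} (hN : F N = ⊤) (hN' : F' N = ⊤)
    (hrank : ∀ j, Module.finrank k (F j) = Module.finrank k (F' j))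
    (a : U →ₗ[k] E) (a' : U →ₗ[k] E') (ha : ∀ u j, a u ∈ F j ↔ a' u ∈ F' j) :
    ∃ e : E ≃ₗ[k] E', e.toLinearMap ∘ₗ a = a' ∧ ∀ v j, v ∈ F j ↔ e v ∈ F' j := by
  have compatible : FlagCompatible F F' (LinearMap.range (a.prod a')) := by
    rintro _ ⟨u, rfl⟩ j
    exact ha u j
  obtain ⟨R, le_R, hR⟩ := exists_maximal_ge_of_wellFoundedGT _ _ compatible
  have le_fst := FlagCompatible.le_map_fst_of_maximal hR hF hF' h₀ h₀' hrank N
  have le_snd := (hR.prop.le_map_fst_iff_le_map_snd h₀ h₀' (hrank N)).mp le_fst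
  obtain ⟨e, he⟩ := hR.prop.exists_linearEquiv h₀ h₀'
    (top_le_iff.mp (hN ▸ le_fst)) (top_le_iff.mp (hN' ▸ le_snd))
  refine ⟨e, LinearMap.ext fun u ↦ he _ (le_R ⟨u, rfl⟩), fun v j ↦ ?_⟩
  obtain ⟨x, hx, rfl⟩ := le_fst (hN ▸ Submodule.mem_top : v ∈ F N)
  rw [LinearMap.fst_apply, he x hx]
  exact hR.prop x hx j

end Flag

section Chain

variable {k}
variable {V' V : ℕ → Type*} [∀ i, AddCommGroup (V' i)] [∀ i, Module k (V' i)]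
  [∀ i, AddCommGroup (V i)] [∀ i, Module k (V i)]

/-- In a sequence of linear maps `V 0 → V 1 → V 2 → ⋯`, the kernel `kernelFlag M i j ⊆ V i` of the
`j`-fold composite `V i → V (i + j)`. -/
def kernelFlag (M : ∀ i, V i →ₗ[k] V (i + 1)) (i : ℕ) : ℕ → Submodule k (V i)
  | 0 => ⊥
  | j + 1 => (kernelFlag M (i + 1) j).comap (M i)

lemma kernelFlag_monotone (M : ∀ i, V i →ₗ[k] V (i + 1)) (i : ℕ) :
    Monotone (kernelFlag M i) := by
  refine monotone_nat_of_le_succ fun j ↦ ?_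
  induction j generalizing i with
  | zero => exact bot_le
  | succ j ih => exact Submodule.comap_mono (ih (i + 1))

lemma kernelFlag_eq_top (M : ∀ i, V i →ₗ[k] V (i + 1)) {n : ℕ}
    (hV : ∀ i, n ≤ i → Subsingleton (V i)) {i j : ℕ} (hij : n ≤ i + j) :
    kernelFlag M i j = ⊤ := by
  induction j generalizing i with
  | zero => have := hV i hij; exact Subsingleton.elim _ _
  | succ j ih => rw [kernelFlag, ih (by lia), Submodule.comap_top]

/-- The rank of the `j`-fold composite `V i → V (i + j)`, as the dimension of its coimage. These
ranks classify bounded sequences of finite-dimensional spaces. -/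
noncomputable def chainRank (M : ∀ i, V i →ₗ[k] V (i + 1)) (i j : ℕ) : ℕ :=
  Module.finrank k (V i ⧸ kernelFlag M i j)

lemma chainRank_zero (M : ∀ i, V i →ₗ[k] V (i + 1)) (i : ℕ) :
    chainRank M i 0 = Module.finrank k (V i) :=
  (Submodule.quotEquivOfEqBot _ rfl).finrank_eq

lemma chainRank_eq_zero (M : ∀ i, V i →ₗ[k] V (i + 1)) {n : ℕ}
    (hV : ∀ i, n ≤ i → Subsingleton (V i)) {i j : ℕ} (hij : n ≤ i + j) :
    chainRank M i j = 0 := by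
  have := Submodule.Quotient.subsingleton_iff.mpr (kernelFlag_eq_top M hV hij)
  exact Module.finrank_zero_of_subsingleton

lemma chainRank_add_finrank_kernelFlag (M : ∀ i, V i →ₗ[k] V (i + 1)) (i j : ℕ)
    [FiniteDimensional k (V i)] :
    chainRank M i j + Module.finrank k (kernelFlag M i j) = chainRank M i 0 := by
  rw [chainRank_zero, chainRank, Submodule.finrank_quotient_add_finrank]

theorem exists_linearEquiv_of_chainRank_eq [∀ i, FiniteDimensional k (V i)]
    [∀ i, FiniteDimensional k (V' i)]
    (M : ∀ i, V i →ₗ[k] V (i + 1)) (M' : ∀ i, V' i →ₗ[k] V' (i + 1)) {n n' : ℕ}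
    (hV : ∀ i, n ≤ i → Subsingleton (V i)) (hV' : ∀ i, n' ≤ i → Subsingleton (V' i))
    (hrank : ∀ i j, chainRank M i j = chainRank M' i j) :
    ∃ g : ∀ i, V i ≃ₗ[k] V' i,
      ∀ i, (g (i + 1)).toLinearMap ∘ₗ M i = M' i ∘ₗ (g i).toLinearMap := by
  have finrank_eq (i j : ℕ) :
      Module.finrank k (kernelFlag M i j) = Module.finrank k (kernelFlag M' i j) := by
    have hM := chainRank_add_finrank_kernelFlag M i j
    have hM' := chainRank_add_finrank_kernelFlag M' i j
    rw [hrank, hrank] at hM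
    lia
  let FlagEquiv (i : ℕ) : Type _ :=
    {e : V i ≃ₗ[k] V' i // ∀ v j, v ∈ kernelFlag M i j ↔ e v ∈ kernelFlag M' i j}
  have extend {U : Type _} [AddCommGroup U] [Module k U] (i : ℕ) (a : U →ₗ[k] V i)
      (a' : U →ₗ[k] V' i) (ha : ∀ u j, a u ∈ kernelFlag M i j ↔ a' u ∈ kernelFlag M' i j) :
      ∃ e : FlagEquiv i, e.1.toLinearMap ∘ₗ a = a' := by
    obtain ⟨e, he, hflag⟩ := exists_linearEquiv_extend_flag (kernelFlag_monotone M i)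
      (kernelFlag_monotone M' i) rfl rfl (kernelFlag_eq_top M hV (j := n + n') (by lia))
      (kernelFlag_eq_top M' hV' (by lia)) (finrank_eq i) a a' ha
    exact ⟨⟨e, hflag⟩, he⟩
  have start : Nonempty (FlagEquiv 0) :=
    ⟨(extend (U := PUnit) 0 0 0 (by simp)).choose⟩
  choose next hnext using fun i (e : FlagEquiv i) ↦ extend (i + 1) (M i)
    (M' i ∘ₗ e.1.toLinearMap) fun u j ↦ e.2 u (j + 1)
  let g (i : ℕ) : FlagEquiv i := Nat.rec start.some next i
  exact ⟨fun i ↦ (g i).1, fun i ↦ hnext i (g i)⟩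

end Chain

section Power

variable {k}
variable {d d' d'' : ℕ} {T : Type*} [Category T] [Preadditive T] [CategoryTheory.Linear k T]
  [HasFiniteBiproducts T]

/-- The power `Sᵈ`, i.e. the direct sum of `d` copies of `S`, to be thought of as `kᵈ ⊗ S`. -/
noncomputable abbrev power (d : ℕ) (S : T) : T :=
  ⨁ fun _ : Fin d ↦ S

/-- The morphism `f ⊗ e : kᵈ ⊗ S ⟶ kᵈ' ⊗ S'` between powers. -/
noncomputable def powerMap {S S' : T} (e : S ⟶ S') (f : (Fin d → k) →ₗ[k] (Fin d' → k)) :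
    power d S ⟶ power d' S' :=
  biproduct.matrix fun i j ↦ LinearMap.toMatrix' f j i • e

lemma powerMap_comp {S S' S'' : T} (e : S ⟶ S') (e' : S' ⟶ S'')
    (f : (Fin d → k) →ₗ[k] (Fin d' → k)) (f' : (Fin d' → k) →ₗ[k] (Fin d'' → k)) :
    powerMap e f ≫ powerMap e' f' = powerMap (e ≫ e') (f' ∘ₗ f) := by
  ext l i
  simp only [powerMap, LinearMap.toMatrix'_comp, Category.assoc, biproduct.matrix_π,
    biproduct.ι_matrix_assoc, biproduct.lift_desc, biproduct.ι_desc, Matrix.mul_apply,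
    Finset.sum_smul, Linear.smul_comp, Linear.comp_smul, smul_smul, mul_comm]

lemma powerMap_id (d : ℕ) (S : T) :
    powerMap (𝟙 S) (LinearMap.id : (Fin d → k) →ₗ[k] (Fin d → k)) = 𝟙 _ := by
  ext i j
  rcases eq_or_ne i j with rfl | hij
  · simp [powerMap]
  · simp [powerMap, hij, biproduct.ι_π_ne _ hij.symm]

/-- The isomorphism `f ⊗ 𝟙 : kᵈ ⊗ S ≅ kᵈ' ⊗ S` induced by a linear isomorphism `f`. -/
noncomputable def powerIso (S : T) (f : (Fin d → k) ≃ₗ[k] (Fin d' → k)) :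
    power d S ≅ power d' S where
  hom := powerMap (𝟙 S) f.toLinearMap
  inv := powerMap (𝟙 S) f.symm.toLinearMap
  hom_inv_id := by simp [powerMap_comp, powerMap_id]
  inv_hom_id := by simp [powerMap_comp, powerMap_id]

lemma exists_eq_powerMap {S S' : T} {e : S ⟶ S'} (he : ∀ φ : S ⟶ S', ∃ c : k, c • e = φ)
    (φ : power d S ⟶ power d' S') :
    ∃ f : (Fin d → k) →ₗ[k] (Fin d' → k), powerMap e f = φ := by
  choose c hc using he
  refine ⟨Matrix.toLin' (.of fun j i ↦ c (biproduct.ι (fun _ ↦ S) i ≫ φ ≫ biproduct.π _ j)), ?_⟩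
  ext i j
  simp [powerMap, hc]

variable {D : Type*} [Category D] [Preadditive D] [CategoryTheory.Linear k D]
  [HasFiniteBiproducts D]

/-- An additive functor commutes with powers. -/
noncomputable def mapPower (F : T ⥤ D) [F.Additive] (d : ℕ) (S : T) :
    F.obj (power d S) ≅ power d (F.obj S) :=
  F.mapBiproduct fun _ : Fin d ↦ S

lemma map_powerMap_comp_mapPower_hom (F : T ⥤ D) [F.Additive] [F.Linear k] {S S' : T}
    (e : S ⟶ S') (f : (Fin d → k) →ₗ[k] (Fin d' → k)) :
    F.map (powerMap e f) ≫ (mapPower F d' S').hom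
      = (mapPower F d S).hom ≫ powerMap (F.map e) f := by
  ext j
  simp only [mapPower, powerMap, Category.assoc, biproduct.matrix_π, Functor.mapBiproduct_hom,
    biproduct.lift_π, ← F.map_comp, ← F.map_smul]
  exact (biproduct.mapBiproduct_hom_desc F _ _).symm

end Power

section Tower

open Pretriangulated

variable {T : Type*} [Category T] [Preadditive T] [CategoryTheory.Linear k T] [HasZeroObject T]
  [HasShift T ℤ] [∀ n : ℤ, (shiftFunctor T n).Additive] [Pretriangulated T]

/-- A bounded tower `⋯ ⟶ obj 2 ⟶ obj 1 ⟶ obj 0` whose `i`-th layer is a power of `S i` and whose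
consecutive layers are glued by multiples of one fixed class `e i`: the composite of the connecting
morphism `δ i` with the projection `π (i + 1)` is `map i ⊗ e i`. -/
structure LinearTower {S : ℕ → T} (e : ∀ i, S i ⟶ (S (i + 1))⟦(1 : ℤ)⟧) where
  dim : ℕ → ℕ
  obj : ℕ → T
  ι (i : ℕ) : obj (i + 1) ⟶ obj i
  π (i : ℕ) : obj i ⟶ power (dim i) (S i)
  δ (i : ℕ) : power (dim i) (S i) ⟶ (obj (i + 1))⟦(1 : ℤ)⟧
  distinguished (i : ℕ) : Triangle.mk (ι i) (π i) (δ i) ∈ distTriang T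
  map (i : ℕ) : (Fin (dim i) → k) →ₗ[k] (Fin (dim (i + 1)) → k)
  comm (i : ℕ) : δ i ≫ (π (i + 1))⟦(1 : ℤ)⟧' ≫ (mapPower (shiftFunctor T (1 : ℤ)) _ _).hom =
    powerMap (e i) (map i)
  bounded : ∃ n, ∀ i, n ≤ i → dim i = 0 ∧ IsZero (obj i)

variable {k} in
theorem exists_linearTower_of_triangles {S : ℕ → T} {e : ∀ i, S i ⟶ (S (i + 1))⟦(1 : ℤ)⟧}
    (he : ∀ i (φ : S i ⟶ (S (i + 1))⟦(1 : ℤ)⟧), ∃ c : k, c • e i = φ)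
    {X Z : ℕ → T} {f : ∀ i, X (i + 1) ⟶ X i} {g : ∀ i, X i ⟶ Z i}
    {h : ∀ i, Z i ⟶ (X (i + 1))⟦(1 : ℤ)⟧}
    (hT : ∀ i, Triangle.mk (f i) (g i) (h i) ∈ distTriang T)
    (hZ : ∀ i, ∃ d, Nonempty (Z i ≅ power d (S i)))
    (hX : ∃ n, ∀ i, n ≤ i → IsZero (X i)) : ∃ P : LinearTower k e, P.obj = X := by
  obtain ⟨n, hn⟩ := hX
  have layer (i : ℕ) : ∃ d, Nonempty (Z i ≅ power d (S i)) ∧ (n ≤ i → d = 0) := by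
    rcases lt_or_ge i n with hi | hi
    · obtain ⟨d, hd⟩ := hZ i
      exact ⟨d, hd, fun hi' ↦ absurd hi' (by lia)⟩
    · have zero : IsZero (Z i) :=
        Triangle.isZero₃_of_isZero₁₂ _ (hT i) (hn (i + 1) (by lia)) (hn i hi)
      have zero' : IsZero (power 0 (S i)) := (IsZero.iff_id_eq_zero _).mpr (by ext i; exact i.elim0)
      exact ⟨0, ⟨zero.iso zero'⟩, fun _ ↦ rfl⟩
  choose d iso hd using layer
  let u (i : ℕ) : Z i ≅ power (d i) (S i) := (iso i).some
  choose M hM using fun i ↦ exists_eq_powerMap (he i)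
    (((u i).inv ≫ h i) ≫ (g (i + 1) ≫ (u (i + 1)).hom)⟦(1 : ℤ)⟧' ≫
      (mapPower (shiftFunctor T (1 : ℤ)) _ _).hom)
  have comm₁ (i : ℕ) : f i ≫ 𝟙 _ = 𝟙 _ ≫ f i := by simp
  have comm₂ (i : ℕ) : (g i ≫ (u i).hom) ≫ (u i).inv = 𝟙 _ ≫ g i := by simp
  have comm₃ (i : ℕ) : ((u i).inv ≫ h i) ≫ (𝟙 _)⟦(1 : ℤ)⟧' = (u i).inv ≫ h i := by simp
  exact ⟨{
    dim := d
    obj := X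
    ι := f
    π i := g i ≫ (u i).hom
    δ i := (u i).inv ≫ h i
    distinguished i := isomorphic_distinguished _ (hT i) _
      (Triangle.isoMk _ _ (Iso.refl _) (Iso.refl _) (u i).symm (comm₁ i) (comm₂ i) (comm₃ i))
    map := M
    comm i := (hM i).symm
    bounded := ⟨n, fun i hi ↦ ⟨hd i hi, hn i hi⟩⟩ }, rfl⟩

namespace LinearTower

variable {k} {S : ℕ → T} {e : ∀ i, S i ⟶ (S (i + 1))⟦(1 : ℤ)⟧} (P Q : LinearTower k e)

lemma eq_zero_of_comp_shift_π {X : T} {j : ℕ}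
    (h : ∀ ψ : X ⟶ (P.obj (j + 1))⟦(1 : ℤ)⟧, ψ = 0) (φ : X ⟶ (P.obj j)⟦(1 : ℤ)⟧)
    (hφ : φ ≫ (P.π j)⟦(1 : ℤ)⟧' = 0) : φ = 0 := by
  obtain ⟨ψ, hψ : φ = ψ ≫ (-(P.ι j)⟦(1 : ℤ)⟧')⟩ :=
    Triangle.coyoneda_exact₁ _ (rot_of_distTriang _ (P.distinguished j)) φ hφ
  exact (hψ.trans (congrArg (· ≫ _) (h ψ))).trans zero_comp

lemma eq_zero_of_source {i j : ℕ} (hS : ∀ j, i + 2 ≤ j → ∀ φ : S i ⟶ (S j)⟦(1 : ℤ)⟧, φ = 0)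
    (hij : i + 2 ≤ j) (d : ℕ) (φ : power d (S i) ⟶ (P.obj j)⟦(1 : ℤ)⟧) : φ = 0 := by
  obtain ⟨n, hn⟩ := P.bounded
  rcases le_total n j with hj | hj
  · exact ((shiftFunctor T (1 : ℤ)).map_isZero (hn j hj).2).eq_of_tgt _ _
  induction hj using Nat.decreasingInduction with
  | self => exact ((shiftFunctor T (1 : ℤ)).map_isZero (hn n le_rfl).2).eq_of_tgt _ _
  | of_succ j _ ih =>
    refine P.eq_zero_of_comp_shift_π (ih (by lia)) φ ?_
    rw [← cancel_mono (mapPower (shiftFunctor T (1 : ℤ)) _ _).hom]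
    ext
    exact (hS j hij _).trans (hS j hij _).symm

lemma exists_forall_subsingleton : ∃ n, ∀ i, n ≤ i → Subsingleton (Fin (P.dim i) → k) := by
  obtain ⟨n, hn⟩ := P.bounded
  exact ⟨n, fun i hi ↦ (hn i hi).1 ▸ inferInstance⟩

/-- The ranks of all composites of the maps of the tower: a countable-valued invariant which
determines `P.obj 0`. -/
noncomputable def ranks : ℕ × ℕ →₀ ℕ :=
  .ofSupportFinite (fun p ↦ chainRank P.map p.1 p.2) <| by
    obtain ⟨n, hn⟩ := P.exists_forall_subsingleton
    refine ((Set.finite_Iio n).prod (Set.finite_Iio n)).subset fun p hp ↦ ?_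
    have : p.1 + p.2 < n := not_le.mp (mt (chainRank_eq_zero P.map hn) hp)
    exact ⟨Set.mem_Iio.mpr (by lia), Set.mem_Iio.mpr (by lia)⟩

variable {P Q} [∀ n : ℤ, (shiftFunctor T n).Linear k]

lemma δ_comp_shift_eq (hS : ∀ i j, i + 2 ≤ j → ∀ φ : S i ⟶ (S j)⟦(1 : ℤ)⟧, φ = 0) {i : ℕ}
    {f : (Fin (P.dim i) → k) →ₗ[k] (Fin (Q.dim i) → k)}
    {f' : (Fin (P.dim (i + 1)) → k) →ₗ[k] (Fin (Q.dim (i + 1)) → k)}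
    (hf : f' ∘ₗ P.map i = Q.map i ∘ₗ f) {φ : P.obj (i + 1) ⟶ Q.obj (i + 1)}
    (hφ : P.π (i + 1) ≫ powerMap (𝟙 _) f' = φ ≫ Q.π (i + 1)) :
    P.δ i ≫ φ⟦(1 : ℤ)⟧' = powerMap (𝟙 _) f ≫ Q.δ i := by
  rw [← sub_eq_zero]
  refine Q.eq_zero_of_comp_shift_π (Q.eq_zero_of_source (hS i) le_rfl _) _ ?_
  rw [← cancel_mono (mapPower (shiftFunctor T (1 : ℤ)) _ _).hom, Preadditive.sub_comp,
    Preadditive.sub_comp, zero_comp, sub_eq_zero]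
  calc ((P.δ i ≫ φ⟦(1 : ℤ)⟧') ≫ (Q.π (i + 1))⟦(1 : ℤ)⟧') ≫ (mapPower _ _ _).hom
      = P.δ i ≫ (P.π (i + 1) ≫ powerMap (𝟙 _) f')⟦(1 : ℤ)⟧' ≫ (mapPower _ _ _).hom := by
        simp only [hφ, Functor.map_comp, Category.assoc]
    _ = (P.δ i ≫ (P.π (i + 1))⟦(1 : ℤ)⟧' ≫ (mapPower _ _ _).hom) ≫ powerMap (𝟙 _) f' := by
        simp only [Functor.map_comp, Category.assoc, map_powerMap_comp_mapPower_hom,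
          CategoryTheory.Functor.map_id]
    _ = powerMap (𝟙 _) f ≫ powerMap (e i) (Q.map i) := by
        rw [P.comm, powerMap_comp, powerMap_comp, hf, Category.comp_id, Category.id_comp]
    _ = ((powerMap (𝟙 _) f ≫ Q.δ i) ≫ (Q.π (i + 1))⟦(1 : ℤ)⟧') ≫ (mapPower _ _ _).hom := by
        simp only [← Q.comm, Category.assoc]

lemma exists_iso_of_iso_succ (hS : ∀ i j, i + 2 ≤ j → ∀ φ : S i ⟶ (S j)⟦(1 : ℤ)⟧, φ = 0) {i : ℕ}
    {f : (Fin (P.dim i) → k) ≃ₗ[k] (Fin (Q.dim i) → k)}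
    {f' : (Fin (P.dim (i + 1)) → k) →ₗ[k] (Fin (Q.dim (i + 1)) → k)}
    (hf : f' ∘ₗ P.map i = Q.map i ∘ₗ f.toLinearMap) {φ : P.obj (i + 1) ≅ Q.obj (i + 1)}
    (hφ : P.π (i + 1) ≫ powerMap (𝟙 _) f' = φ.hom ≫ Q.π (i + 1)) :
    ∃ ψ : P.obj i ≅ Q.obj i, P.π i ≫ powerMap (𝟙 _) f.toLinearMap = ψ.hom ≫ Q.π i := by
  have comm := δ_comp_shift_eq hS hf hφ
  obtain ⟨(ψ : P.obj i ⟶ Q.obj i), hψ₁, hψ₂⟩ := complete_distinguished_triangle_morphism₂ _ _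
    (P.distinguished i) (Q.distinguished i) φ.hom (powerMap (𝟙 _) f.toLinearMap) comm
  let Ψ : Triangle.mk (P.ι i) (P.π i) (P.δ i) ⟶ .mk (Q.ι i) (Q.π i) (Q.δ i) :=
    Triangle.homMk _ _ φ.hom ψ (powerIso (S i) f).hom hψ₁ hψ₂ comm
  have : IsIso ψ := isIso₂_of_isIso₁₃ Ψ (P.distinguished i) (Q.distinguished i)
    (inferInstanceAs (IsIso φ.hom)) (inferInstanceAs (IsIso (powerIso (S i) f).hom))
  exact ⟨asIso ψ, hψ₂⟩

lemma exists_iso_of_intertwiner (hS : ∀ i j, i + 2 ≤ j → ∀ φ : S i ⟶ (S j)⟦(1 : ℤ)⟧, φ = 0)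
    (g : ∀ i, (Fin (P.dim i) → k) ≃ₗ[k] (Fin (Q.dim i) → k))
    (hg : ∀ i, (g (i + 1)).toLinearMap ∘ₗ P.map i = Q.map i ∘ₗ (g i).toLinearMap) (i : ℕ) :
    ∃ φ : P.obj i ≅ Q.obj i, P.π i ≫ powerMap (𝟙 _) (g i).toLinearMap = φ.hom ≫ Q.π i := by
  obtain ⟨n, hn⟩ := P.bounded
  obtain ⟨n', hn'⟩ := Q.bounded
  have base (i : ℕ) (hi : n + n' ≤ i) :
      ∃ φ : P.obj i ≅ Q.obj i, P.π i ≫ powerMap (𝟙 _) (g i).toLinearMap = φ.hom ≫ Q.π i :=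
    have zero := (hn i (by lia)).2
    ⟨zero.iso (hn' i (by lia)).2, zero.eq_of_src _ _⟩
  rcases le_total (n + n') i with hi | hi
  · exact base i hi
  induction hi using Nat.decreasingInduction with
  | self => exact base _ le_rfl
  | of_succ i _ ih =>
    obtain ⟨φ, hφ⟩ := ih
    exact exists_iso_of_iso_succ hS (hg i) hφ

theorem nonempty_iso_of_ranks_eq (hS : ∀ i j, i + 2 ≤ j → ∀ φ : S i ⟶ (S j)⟦(1 : ℤ)⟧, φ = 0)
    (h : P.ranks = Q.ranks) : Nonempty (P.obj 0 ≅ Q.obj 0) := by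
  obtain ⟨n, hn⟩ := P.exists_forall_subsingleton
  obtain ⟨n', hn'⟩ := Q.exists_forall_subsingleton
  obtain ⟨g, hg⟩ := exists_linearEquiv_of_chainRank_eq P.map Q.map hn hn'
    fun i j ↦ DFunLike.congr_fun h (i, j)
  exact ⟨(exists_iso_of_intertwiner hS g hg 0).choose⟩

variable (k e) in
theorem exists_countable_representatives
    (hS : ∀ i j, i + 2 ≤ j → ∀ φ : S i ⟶ (S j)⟦(1 : ℤ)⟧, φ = 0) :
    ∃ B : ℕ → T, ∀ P : LinearTower k e, ∃ m, Nonempty (P.obj 0 ≅ B m) := by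
  obtain ⟨code, code_injective⟩ := Countable.exists_injective_nat (ℕ × ℕ →₀ ℕ)
  have representative (m : ℕ) : ∃ Y : T, ∀ P : LinearTower k e, code P.ranks = m →
      Nonempty (P.obj 0 ≅ Y) := by
    by_cases h : ∃ Q : LinearTower k e, code Q.ranks = m
    · obtain ⟨Q, hQ⟩ := h
      exact ⟨Q.obj 0, fun P hP ↦
        nonempty_iso_of_ranks_eq hS (code_injective (hP.trans hQ.symm))⟩
    · exact ⟨S 0, fun P hP ↦ (h ⟨P, hP⟩).elim⟩
  choose B hB using representative
  exact ⟨B, fun P ↦ ⟨_, hB _ P rfl⟩⟩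

end LinearTower

end Tower

section Truncation

open DerivedCategory DerivedCategory.TStructure

lemma isIso_homologyFunctor_map_truncLTι_app (X : DerivedCategory C) {n b : ℤ} (h : n < b) :
    IsIso ((homologyFunctor C n).map ((t.truncLTι b).app X)) := by
  have hT := t.triangleLTGE_distinguished b X
  have : Mono ((homologyFunctor C n).map ((t.truncLTι b).app X)) :=
    (HomologySequence.mono_homologyMap_mor₁_iff _ hT (n - 1) n).mpr
      ((isZero_of_isGE ((t.truncGE b).obj X) b (n - 1) (by lia)).eq_of_src _ _)
  have : Epi ((homologyFunctor C n).map ((t.truncLTι b).app X)) :=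
    (HomologySequence.epi_homologyMap_mor₁_iff _ hT n).mpr
      ((isZero_of_isGE ((t.truncGE b).obj X) b n h).eq_of_tgt _ _)
  exact isIso_of_mono_of_epi _

lemma isIso_homologyFunctor_map_truncGEπ_app (X : DerivedCategory C) {n a : ℤ} (h : a ≤ n) :
    IsIso ((homologyFunctor C n).map ((t.truncGEπ a).app X)) := by
  have hT := t.triangleLTGE_distinguished a X
  have : Mono ((homologyFunctor C n).map ((t.truncGEπ a).app X)) :=
    (HomologySequence.mono_homologyMap_mor₂_iff _ hT n).mpr
      ((isZero_of_isLE ((t.truncLT a).obj X) (a - 1) n (by lia)).eq_of_src _ _)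
  have : Epi ((homologyFunctor C n).map ((t.truncGEπ a).app X)) :=
    (HomologySequence.epi_homologyMap_mor₂_iff _ hT n (n + 1)).mpr
      ((isZero_of_isLE ((t.truncLT a).obj X) (a - 1) (n + 1) (by lia)).eq_of_tgt _ _)
  exact isIso_of_mono_of_epi _

lemma nonempty_truncGELT_obj_iso (X : DerivedCategory C) {n n' : ℤ} (h : n + 1 = n') :
    Nonempty ((t.truncGELT n n').obj X ≅
      (singleFunctor C n).obj ((homologyFunctor C n).obj X)) := by
  have : ((t.truncGELT n n').obj X).IsLE n := t.isLE_of_le _ (n' - 1) n (by lia)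
  obtain ⟨Y, ⟨u⟩⟩ := exists_iso_singleFunctor_obj_of_isGE_of_isLE ((t.truncGELT n n').obj X) n
  have := isIso_homologyFunctor_map_truncLTι_app X (show n < n' by lia)
  have := isIso_homologyFunctor_map_truncGEπ_app ((t.truncLT n').obj X) (le_refl n)
  let v : Y ≅ (homologyFunctor C n).obj X :=
    calc Y ≅ (homologyFunctor C n).obj ((singleFunctor C n).obj Y) :=
          ((singleFunctorCompHomologyFunctorIso C n).app Y).symm
      _ ≅ (homologyFunctor C n).obj ((t.truncGELT n n').obj X) :=
          (homologyFunctor C n).mapIso u.symm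
      _ ≅ (homologyFunctor C n).obj ((t.truncLT n').obj X) :=
          (asIso ((homologyFunctor C n).map ((t.truncGEπ n).app ((t.truncLT n').obj X)))).symm
      _ ≅ (homologyFunctor C n).obj X :=
          asIso ((homologyFunctor C n).map ((t.truncLTι n').app X))
  exact ⟨u ≪≫ (singleFunctor C n).mapIso v⟩

/-- `Hom(A[-n], B[-m][a]) ≃ Hom(A, B[p])` for `p = a + n - m`, by applying the shift by `n`. -/
noncomputable def singleHomLinearEquiv (A B : C) {n m a p : ℤ} (h : m + p = a + n) :
    ((singleFunctor C n).obj A ⟶ ((singleFunctor C m).obj B)⟦a⟧) ≃ₗ[k]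
      ((singleFunctor C 0).obj A ⟶ ((singleFunctor C 0).obj B)⟦p⟧) :=
  have map_bijective := (Functor.FullyFaithful.ofFullyFaithful
    (shiftFunctor (DerivedCategory C) n)).map_bijective
      ((singleFunctor C n).obj A) (((singleFunctor C m).obj B)⟦a⟧)
  let source : ((singleFunctor C n).obj A)⟦n⟧ ≅ (singleFunctor C 0).obj A :=
    ((singleFunctors C).shiftIso n 0 n (add_zero n)).app A
  let target : ((singleFunctor C m).obj B)⟦a⟧⟦n⟧ ≅ ((singleFunctor C 0).obj B)⟦p⟧ :=
    (shiftFunctorAdd' (DerivedCategory C) a n (m + p) h.symm).symm.app _ ≪≫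
      (shiftFunctorAdd' (DerivedCategory C) m p (m + p) rfl).app _ ≪≫
      (shiftFunctor (DerivedCategory C) p).mapIso
        (((singleFunctors C).shiftIso m 0 m (add_zero m)).app B)
  .ofBijective ((shiftFunctor (DerivedCategory C) n).mapLinearMap k) map_bijective ≪≫ₗ
    Linear.homCongr k source target

variable {k}

lemma exists_linearTower {A : C} {b : ℤ}
    {e : ∀ i : ℕ, (singleFunctor C (b - (i + 1 : ℕ))).obj A ⟶
      ((singleFunctor C (b - (i + 1 + 1 : ℕ))).obj A)⟦(1 : ℤ)⟧}
    (he : ∀ i φ, ∃ c : k, c • e i = φ) (X : DerivedCategory C)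
    (hX : ∀ i, ∃ d, Nonempty ((homologyFunctor C i).obj X ≅ power d A))
    (hX₁ : ∀ i, b ≤ i → IsZero ((homologyFunctor C i).obj X))
    (hX₂ : ∃ a, ∀ i, i < a → IsZero ((homologyFunctor C i).obj X)) :
    ∃ P : LinearTower k e, Nonempty (X ≅ P.obj 0) := by
  obtain ⟨a, ha⟩ := hX₂
  have : X.IsLE (b - 1) := (isLE_iff X _).mpr fun i hi ↦ hX₁ i (by lia)
  have : X.IsGE a := (isGE_iff X a).mpr ha
  have : IsIso ((t.truncLTι b).app X) :=
    (t.isLE_iff_isIso_truncLTι_app (b - 1) b (by lia) X).mp inferInstance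
  have layer (i : ℕ) : ∃ d, Nonempty ((t.truncGELT (b - (i + 1 : ℕ)) (b - i)).obj X ≅
      power d ((singleFunctor C (b - (i + 1 : ℕ))).obj A)) := by
    obtain ⟨u⟩ := nonempty_truncGELT_obj_iso X (show b - (i + 1 : ℕ) + 1 = b - i by lia)
    obtain ⟨d, ⟨v⟩⟩ := hX (b - (i + 1 : ℕ))
    exact ⟨d, ⟨u ≪≫ (singleFunctor C _).mapIso v ≪≫ mapPower (singleFunctor C _) d A⟩⟩
  have bounded : ∃ n : ℕ, ∀ i : ℕ, n ≤ i → IsZero ((t.truncLT (b - i)).obj X) := by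
    refine ⟨(b - a).toNat, fun i hi ↦ ?_⟩
    have : X.IsGE (b - i) := t.isGE_of_ge X (b - i) a (by lia)
    exact t.isZero_truncLT_obj_of_isGE (b - i) X
  let triangle (i : ℕ) := (t.triangleLTLTGELT (b - (i + 1 : ℕ)) (b - i) (by lia)).obj X
  obtain ⟨P, hP⟩ := exists_linearTower_of_triangles (X := fun i ↦ (t.truncLT (b - i)).obj X) he
    (f := fun i ↦ (triangle i).mor₁) (g := fun i ↦ (triangle i).mor₂)
    (h := fun i ↦ (triangle i).mor₃)
    (fun i ↦ t.triangleLTLTGELT_distinguished _ _ (by lia) X) layer bounded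
  have obj_zero : P.obj 0 = (t.truncLT (b - (0 : ℕ))).obj X := congrFun hP 0
  rw [Nat.cast_zero, sub_zero] at obj_zero
  exact ⟨P, ⟨(asIso ((t.truncLTι b).app X)).symm ≪≫ eqToIso obj_zero.symm⟩⟩

theorem exists_representatives_of_isZero_ge {A : C}
    (h₂ : ∃ e : (singleFunctor C 0).obj A ⟶ ((singleFunctor C 0).obj A)⟦(2 : ℤ)⟧,
      ∀ φ, ∃ c : k, c • e = φ)
    (h₃ : ∀ n : ℕ, 3 ≤ n →
      ∀ φ : (singleFunctor C 0).obj A ⟶ ((singleFunctor C 0).obj A)⟦(n : ℤ)⟧, φ = 0) (b : ℤ) :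
    ∃ B : ℕ → DerivedCategory C, ∀ X : DerivedCategory C,
      (∀ i, ∃ d, Nonempty ((homologyFunctor C i).obj X ≅ power d A)) →
      (∀ i, b ≤ i → IsZero ((homologyFunctor C i).obj X)) →
      (∃ a, ∀ i, i < a → IsZero ((homologyFunctor C i).obj X)) →
      ∃ m, Nonempty (X ≅ B m) := by
  obtain ⟨e₀, he₀⟩ := h₂
  let e (i : ℕ) : (singleFunctor C (b - (i + 1 : ℕ))).obj A ⟶
      ((singleFunctor C (b - (i + 1 + 1 : ℕ))).obj A)⟦(1 : ℤ)⟧ :=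
    (singleHomLinearEquiv k A A (by lia)).symm e₀
  have he (i φ) : ∃ c : k, c • e i = φ := by
    obtain ⟨c, hc⟩ := he₀ (singleHomLinearEquiv k A A (by lia) φ)
    exact ⟨c, by rw [← map_smul, hc, LinearEquiv.symm_apply_apply]⟩
  have hS (i j : ℕ) (hij : i + 2 ≤ j) (φ : (singleFunctor C (b - (i + 1 : ℕ))).obj A ⟶
      ((singleFunctor C (b - (j + 1 : ℕ))).obj A)⟦(1 : ℤ)⟧) : φ = 0 :=
    (singleHomLinearEquiv k A A (by lia)).map_eq_zero_iff.mp (h₃ (j + 1 - i) (by lia) _)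
  obtain ⟨B, hB⟩ := LinearTower.exists_countable_representatives k e hS
  refine ⟨B, fun X hX hX₁ hX₂ ↦ ?_⟩
  obtain ⟨P, ⟨u⟩⟩ := exists_linearTower he X hX hX₁ hX₂
  obtain ⟨m, ⟨v⟩⟩ := hB P
  exact ⟨m, ⟨u ≪≫ v⟩⟩

theorem stmt1_general {A : C}
    (h₂ : ∃ e : (singleFunctor C 0).obj A ⟶ ((singleFunctor C 0).obj A)⟦(2 : ℤ)⟧,
      ∀ φ, ∃ c : k, c • e = φ)
    (h₃ : ∀ n : ℕ, 3 ≤ n →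
      ∀ φ : (singleFunctor C 0).obj A ⟶ ((singleFunctor C 0).obj A)⟦(n : ℤ)⟧, φ = 0) :
    ∃ B : ℕ → DerivedCategory C, ∀ X : DerivedCategory C,
      (∀ i : ℤ, ∃ d : ℕ, Nonempty ((homologyFunctor C i).obj X ≅ ⨁ fun _ : Fin d ↦ A)) →
      (∃ a b : ℤ, ∀ i : ℤ, (i < a ∨ b < i) → IsZero ((homologyFunctor C i).obj X)) →
      ∃ m : ℕ, Nonempty (X ≅ B m) := by
  choose B hB using exists_representatives_of_isZero_ge h₂ h₃
  obtain ⟨decode, decode_surjective⟩ := exists_surjective_nat (ℤ × ℕ)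
  refine ⟨fun m ↦ Function.uncurry B (decode m), fun X hX ⟨a, b, hab⟩ ↦ ?_⟩
  obtain ⟨m, hm⟩ := hB (b + 1) X hX (fun i hi ↦ hab i (.inr (by lia)))
    ⟨a, fun i hi ↦ hab i (.inl hi)⟩
  obtain ⟨m', hm'⟩ := decode_surjective (b + 1, m)
  exact ⟨m', by simpa only [hm', Function.uncurry_apply_pair] using hm⟩

end Truncation

lemma HomIsLine.exists_span {A : C} {Y : DerivedCategory C} (h : HomIsLine k A Y) :
    ∃ e : (DerivedCategory.singleFunctor C 0).obj A ⟶ Y, ∀ φ, ∃ c : k, c • e = φ := by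
  obtain ⟨e, -, he⟩ := h
  refine ⟨e, fun φ ↦ ?_⟩
  obtain ⟨c, rfl⟩ := he φ
  exact ⟨c, by simp⟩

/-- **Proposition 3.6 (countability part).** Let `A` be an object of the `k`-linear
abelian category `C` satisfying the hypotheses (3.3).  Then the objects `B` of the
bounded derived category of `C` all of whose cohomology objects are finite direct sums of
copies of `A` (and vanish outside a bounded range) form only countably many isomorphism
classes: there is a sequence `(B_m)_{m ∈ ℕ}` such that every such `B` is isomorphic to
some `B_m`. -/
theorem stmt1 (A : C) (hA : GoodBase k A) :
    ∃ B : ℕ → DerivedCategory C, ∀ X : DerivedCategory C,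
      (∀ i : ℤ, ∃ d : ℕ,
        Nonempty ((DerivedCategory.homologyFunctor C i).obj X ≅ ⨁ (fun _ : Fin d => A))) →
      (∃ a b : ℤ, ∀ i : ℤ, (i < a ∨ b < i) →
        IsZero ((DerivedCategory.homologyFunctor C i).obj X)) →
      ∃ m : ℕ, Nonempty (X ≅ B m) :=
  stmt1_general hA.2.1.exists_span fun n hn ↦ hA.2.2 n (by lia) (by lia)

end ThreeCusps
end

section
/- Let k be a field and C a k-linear abelian category, and let A be an object of C with Hom(A,A) and Ext^2(A,A) one-dimensional over k and Ext^i(A,A) = 0 for all i ≥ 1 with i ≠ 2. Then for every n ∈ ℕ there exists an object of D^b(C) of type A_n, i.e. an object X with H^i(X) ≅ A for 0 ≤ i ≤ n, H^i(X) = 0 for all other i, and Hom_{D^b(C)}(A, X[j]) one-dimensional over k for j ∈ {0, n+2} and zero for every other j ∈ ℤ. (Existence part of Lemma 3.4.) -/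
open CategoryTheory Limits

namespace ThreeCusps

variable (k : Type*) [Field k]
variable {C : Type*} [Category C] [Abelian C] [CategoryTheory.Linear k C]
  [HasDerivedCategory C]

/-!
An object of type `A₀` is `A` itself. If `X` is of type `Aₙ`, a nonzero element of `Hom(A, X[n+2])`
is a morphism `A[-(n+2)] ⟶ X`; let `Y` be its cone. The homology of `A[-(n+2)]` sits in degree
`n + 2`, so it contributes one more copy of `A` to the homology of `Y`, in degree `n + 1`. In the
long exact sequence of `Hom(A, -)`, the class of the identity of `A` maps to the chosen nonzero
element, so the two lines in degree `n + 2` cancel, while the line `Ext²(A, A)`, shifted to degree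
`n + 4`, appears in degree `n + 3` of `Hom(A, Y[-])`. Hence `Y` is of type `Aₙ₊₁`.
-/

section HomologicalFunctor

open Pretriangulated

variable {𝒯 𝒜 : Type*} [Category 𝒯] [HasShift 𝒯 ℤ] [Preadditive 𝒯] [HasZeroObject 𝒯]
  [∀ n : ℤ, (shiftFunctor 𝒯 n).Additive] [Pretriangulated 𝒯] [Category 𝒜] [Abelian 𝒜]
  (F : 𝒯 ⥤ 𝒜) [F.IsHomological] [F.ShiftSequence ℤ] {T : Triangle 𝒯} (hT : T ∈ distTriang 𝒯)
  {n₀ n₁ : ℤ} (h : n₀ + 1 = n₁)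

include hT h

lemma isIso_shift_map_mor₂ (h₀ : IsZero ((F.shift n₀).obj T.obj₁))
    (h₁ : IsZero ((F.shift n₁).obj T.obj₁)) : IsIso ((F.shift n₀).map T.mor₂) := by
  have := (F.homologySequence_mono_shift_map_mor₂_iff T hT n₀).2 (h₀.eq_of_src _ _)
  have := (F.homologySequence_epi_shift_map_mor₂_iff T hT n₀ n₁ h).2 (h₁.eq_of_tgt _ _)
  exact isIso_of_mono_of_epi _

lemma isIso_homologySequenceδ (h₀ : IsZero ((F.shift n₀).obj T.obj₂))
    (h₁ : IsZero ((F.shift n₁).obj T.obj₂)) : IsIso (F.homologySequenceδ T n₀ n₁ h) := by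
  have := (F.homologySequence_exact₃ T hT n₀ n₁ h).mono_g (h₀.eq_of_src _ _)
  have := (F.homologySequence_exact₁ T hT n₀ n₁ h).epi_f (h₁.eq_of_tgt _ _)
  exact isIso_of_mono_of_epi _

lemma isZero_shift_obj₃ (h₀ : Epi ((F.shift n₀).map T.mor₁))
    (h₁ : Mono ((F.shift n₁).map T.mor₁)) : IsZero ((F.shift n₀).obj T.obj₃) :=
  (F.homologySequence_exact₃ T hT n₀ n₁ h).isZero_of_both_zeros
    ((F.homologySequence_epi_shift_map_mor₁_iff T hT n₀).1 h₀)
    ((F.homologySequence_mono_shift_map_mor₁_iff T hT n₀ n₁ h).1 h₁)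

end HomologicalFunctor

section HomologyConstOn

open Pretriangulated DerivedCategory

variable {A : C} {s t : Set ℤ} {X : DerivedCategory C}

/-- The homology of `X` is isomorphic to `A` in the degrees belonging to `s` and vanishes in all
other degrees. -/
structure HomologyConstOn (A : C) (s : Set ℤ) (X : DerivedCategory C) : Prop where
  nonempty_iso {i : ℤ} (hi : i ∈ s) : Nonempty ((homologyFunctor C i).obj X ≅ A)
  isZero {i : ℤ} (hi : i ∉ s) : IsZero ((homologyFunctor C i).obj X)

lemma homologyConstOn_singleFunctor (A : C) (n : ℤ) :
    HomologyConstOn A {n} ((singleFunctor C n).obj A) where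
  nonempty_iso := by
    rintro _ rfl
    exact ⟨(singleFunctorCompHomologyFunctorIso C _).app A⟩
  isZero hi := by
    rcases lt_or_gt_of_ne hi with hlt | hgt
    · exact isZero_of_isGE _ n _ hlt
    · exact isZero_of_isLE _ n _ hgt

lemma HomologyConstOn.shift (hX : HomologyConstOn A s X) (a : ℤ)
    (hst : ∀ i, i ∈ t ↔ a + i ∈ s) : HomologyConstOn A t (X⟦a⟧) := by
  have shiftIso (i : ℤ) : (homologyFunctor C i).obj (X⟦a⟧) ≅ (homologyFunctor C (a + i)).obj X :=
    ((homologyFunctor C 0).shiftIso a i (a + i) rfl).app X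
  exact
    { nonempty_iso hi := (hX.nonempty_iso ((hst _).1 hi)).map (shiftIso _ ≪≫ ·)
      isZero hi := (hX.isZero (mt (hst _).2 hi)).of_iso (shiftIso _) }

lemma HomologyConstOn.obj₃ {T : Triangle (DerivedCategory C)} (hT : T ∈ distTriang _) {m : ℤ}
    (h₁ : HomologyConstOn A {m + 1} T.obj₁) (h₂ : HomologyConstOn A s T.obj₂)
    (hm : m ∉ s) (hm' : m + 1 ∉ s) : HomologyConstOn A (insert m s) T.obj₃ where
  nonempty_iso := by
    rintro i (rfl | hi)
    · have : IsIso (HomologySequence.δ T i (i + 1) rfl) :=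
        isIso_homologySequenceδ (homologyFunctor C 0) hT rfl (h₂.isZero hm) (h₂.isZero hm')
      exact (h₁.nonempty_iso rfl).map (asIso (HomologySequence.δ T i (i + 1) rfl) ≪≫ ·)
    · have hi₀ : i ≠ m + 1 := by grind
      have hi₁ : i + 1 ≠ m + 1 := by grind
      have : IsIso ((homologyFunctor C i).map T.mor₂) :=
        isIso_shift_map_mor₂ (homologyFunctor C 0) hT rfl (h₁.isZero hi₀) (h₁.isZero hi₁)
      exact (h₂.nonempty_iso hi).map ((asIso ((homologyFunctor C i).map T.mor₂)).symm ≪≫ ·)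
  isZero {i} hi := by
    obtain ⟨him, his⟩ : i ≠ m ∧ i ∉ s := by simpa using hi
    have hi₁ : i + 1 ≠ m + 1 := by lia
    exact isZero_shift_obj₃ (homologyFunctor C 0) hT rfl
      ⟨fun _ _ _ => (h₂.isZero his).eq_of_src _ _⟩ ⟨fun _ _ _ => (h₁.isZero hi₁).eq_of_tgt _ _⟩

end HomologyConstOn

section HomLinesOn

open Pretriangulated Opposite Module

variable {𝒯 : Type*} [Category 𝒯] [Preadditive 𝒯] [CategoryTheory.Linear k 𝒯] {S X Y : 𝒯}

variable {k} in
lemma finrank_hom_eq_of_bijective (f : X ⟶ Y)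
    (hf : Function.Bijective fun φ : S ⟶ X => φ ≫ f) : finrank k (S ⟶ X) = finrank k (S ⟶ Y) :=
  (LinearEquiv.ofBijective (Linear.rightComp k S f) hf).finrank_eq

variable {k} in
lemma bijective_comp_of_finrank_eq_one (hX : finrank k (S ⟶ X) = 1)
    (hY : finrank k (S ⟶ Y) = 1) {f : X ⟶ Y} {φ : S ⟶ X} (hφ : φ ≫ f ≠ 0) :
    Function.Bijective fun ψ : S ⟶ X => ψ ≫ f := by
  have := isSimpleModule_iff_finrank_eq_one.2 hX
  have := isSimpleModule_iff_finrank_eq_one.2 hY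
  exact LinearMap.bijective_of_ne_zero (f := Linear.rightComp k S f)
    fun h => hφ (LinearMap.congr_fun h φ)

variable [HasShift 𝒯 ℤ]

/-- The graded vector space `⨁ j, Hom(S, X⟦j⟧)` is one-dimensional in the degrees belonging to `s`
and vanishes in all other degrees. -/
structure HomLinesOn (S : 𝒯) (s : Set ℤ) (X : 𝒯) : Prop where
  finrank_eq_one {j : ℤ} (hj : j ∈ s) : finrank k (S ⟶ X⟦j⟧) = 1
  subsingleton {j : ℤ} (hj : j ∉ s) : Subsingleton (S ⟶ X⟦j⟧)

namespace HomLinesOn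

variable {k} {s t : Set ℤ}

lemma isZero (hX : HomLinesOn k S s X) {j : ℤ} (hj : j ∉ s) :
    IsZero (((preadditiveCoyoneda.obj (op S)).shift j).obj X) :=
  have := hX.subsingleton hj
  AddCommGrpCat.isZero_of_subsingleton (AddCommGrpCat.of (S ⟶ X⟦j⟧))

lemma shift (hX : HomLinesOn k S s X) (a : ℤ) (hst : ∀ j, j ∈ t ↔ a + j ∈ s) :
    HomLinesOn k S t (X⟦a⟧) := by
  have shiftEquiv (j : ℤ) : (S ⟶ X⟦a⟧⟦j⟧) ≃ₗ[k] (S ⟶ X⟦a + j⟧) :=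
    Linear.homCongr k (Iso.refl S) ((shiftFunctorAdd 𝒯 a j).symm.app X)
  exact
    { finrank_eq_one hj := (shiftEquiv _).finrank_eq.trans (hX.finrank_eq_one ((hst _).1 hj))
      subsingleton hj :=
        have := hX.subsingleton (mt (hst _).2 hj)
        (shiftEquiv _).toEquiv.subsingleton }

lemma exists_comp_shift_map_ne_zero (hX : HomLinesOn k S s X) {m : ℤ} (hm : m ∈ s) :
    ∃ (f : S⟦-m⟧ ⟶ X) (φ : S ⟶ S⟦-m⟧⟦m⟧), φ ≫ f⟦m⟧' ≠ 0 := by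
  obtain ⟨e, he, -⟩ := finrank_eq_one_iff'.1 (hX.finrank_eq_one hm)
  let ι : S⟦-m⟧⟦m⟧ ≅ S := shiftNegShift S m
  obtain ⟨f, hf⟩ := (shiftFunctor 𝒯 m).map_surjective (ι.hom ≫ e)
  exact ⟨f, ι.inv, by simpa [hf] using he⟩

variable [HasZeroObject 𝒯] [∀ n : ℤ, (shiftFunctor 𝒯 n).Additive] [Pretriangulated 𝒯]

lemma obj₃ {T : Triangle 𝒯} (hT : T ∈ distTriang 𝒯) {m l : ℤ}
    (h₁ : HomLinesOn k S {m, l + 1} T.obj₁) (h₂ : HomLinesOn k S s T.obj₂)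
    (hm : m ∈ s) (hm' : m - 1 ∉ s) (hl : l ∉ s) (hl' : l + 1 ∉ s)
    {φ : S ⟶ T.obj₁⟦m⟧} (hφ : φ ≫ T.mor₁⟦m⟧' ≠ 0) :
    HomLinesOn k S (insert l (s \ {m})) T.obj₃ := by
  let F := preadditiveCoyoneda.obj (op S)
  have bij : Function.Bijective ((F.shift m).map T.mor₁) :=
    bijective_comp_of_finrank_eq_one (h₁.finrank_eq_one (by simp)) (h₂.finrank_eq_one hm) hφ
  have epi_mor₁ {j : ℤ} (hj : j ∈ s → j = m) : Epi ((F.shift j).map T.mor₁) := by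
    by_cases hjs : j ∈ s
    · obtain rfl := hj hjs
      exact (AddCommGrpCat.epi_iff_surjective _).2 bij.surjective
    · exact ⟨fun _ _ _ => (h₂.isZero hjs).eq_of_src _ _⟩
  have mono_mor₁ {j : ℤ} (hj : j ≠ l + 1) : Mono ((F.shift j).map T.mor₁) := by
    by_cases hjm : j = m
    · subst hjm
      exact (AddCommGrpCat.mono_iff_injective _).2 bij.injective
    · exact ⟨fun _ _ _ => (h₁.isZero (by simp [hjm, hj])).eq_of_tgt _ _⟩
  refine ⟨?_, fun {j} hj => ?_⟩
  · rintro j (rfl | ⟨hj, hjm⟩)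
    · have := isIso_homologySequenceδ F hT rfl (h₂.isZero hl) (h₂.isZero hl')
      let δ : T.obj₃⟦j⟧ ⟶ T.obj₁⟦j + 1⟧ :=
        T.mor₃⟦j⟧' ≫ (shiftFunctorAdd' 𝒯 1 j (j + 1) (by lia)).inv.app T.obj₁
      have hδ : Function.Bijective fun ψ : S ⟶ T.obj₃⟦j⟧ => ψ ≫ δ := by
        rw [← funext (preadditiveCoyoneda_homologySequenceδ_apply T j (j + 1) rfl)]
        exact ConcreteCategory.bijective_of_isIso (F.homologySequenceδ T j (j + 1) rfl)
      exact (finrank_hom_eq_of_bijective δ hδ).trans (h₁.finrank_eq_one (by simp))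
    · have hj₀ : j ∉ ({m, l + 1} : Set ℤ) := by grind
      have hj₁ : j + 1 ∉ ({m, l + 1} : Set ℤ) := by grind
      have := isIso_shift_map_mor₂ F hT rfl (h₁.isZero hj₀) (h₁.isZero hj₁)
      rw [← finrank_hom_eq_of_bijective (T.mor₂⟦j⟧')
        (ConcreteCategory.bijective_of_isIso ((F.shift j).map T.mor₂)), h₂.finrank_eq_one hj]
  · exact AddCommGrpCat.subsingleton_of_isZero
      (isZero_shift_obj₃ F hT rfl (epi_mor₁ (j := j) (by grind)) (mono_mor₁ (by grind)))

end HomLinesOn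

end HomLinesOn

section Comparison

open Module DerivedCategory

variable {k} {A : C} {n : ℕ} {X Y : DerivedCategory C}

lemma homIsLine_iff_finrank_eq_one :
    HomIsLine k A Y ↔ finrank k ((singleFunctor C 0).obj A ⟶ Y) = 1 := by
  simp only [HomIsLine, finrank_eq_one_iff', Functor.map_smul,
    CategoryTheory.Functor.map_id, Linear.smul_comp, Category.id_comp, eq_comm (b := _ • _)]

lemma GoodBase.homLinesOn (hA : GoodBase k A) :
    HomLinesOn k ((singleFunctor C 0).obj A) {0, 2} ((singleFunctor C 0).obj A) := by
  obtain ⟨hEnd, hExt₂, hExt⟩ := hA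
  refine ⟨?_, fun {j} hj => ?_⟩
  · rintro j (rfl | rfl)
    · have hom₀ : (A ⟶ A) ≃ₗ[k] ((singleFunctor C 0).obj A ⟶ (singleFunctor C 0).obj A) :=
        .ofBijective ((singleFunctor C 0).mapLinearMap k)
          ((Functor.FullyFaithful.ofFullyFaithful (singleFunctor C 0)).map_bijective A A)
      have shift₀ := Linear.homCongr k (Iso.refl ((singleFunctor C 0).obj A))
        ((shiftFunctorZero (DerivedCategory C) ℤ).app ((singleFunctor C 0).obj A))
      exact (hom₀ ≪≫ₗ shift₀.symm).finrank_eq.symm.trans hEnd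
    · exact homIsLine_iff_finrank_eq_one.1 hExt₂
  · obtain ⟨hj₀, hj₂⟩ : j ≠ 0 ∧ j ≠ 2 := by simpa using hj
    refine subsingleton_of_forall_eq 0 fun φ => ?_
    rcases lt_or_gt_of_ne hj₀ with hneg | hpos
    · exact TStructure.t.zero_of_isLE_of_isGE φ 0 (-j) (by lia) inferInstance
        (TStructure.t.isGE_shift _ 0 j (-j) (by lia))
    · lift j to ℕ using hpos.le
      exact hExt j (by lia) (by lia) φ

lemma isTypeA_iff : IsTypeA k A n X ↔
    HomologyConstOn A (Set.Icc 0 n) X ∧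
      HomLinesOn k ((singleFunctor C 0).obj A) {0, (n : ℤ) + 2} X := by
  constructor
  · rintro ⟨hH, hH₀, hL, hL₀⟩
    exact ⟨⟨fun hi => hH _ hi.1 hi.2, fun hi => hH₀ _ (by grind)⟩,
      ⟨fun hj => homIsLine_iff_finrank_eq_one.1 (hL _ hj),
        fun hj => subsingleton_of_forall_eq 0 (hL₀ _ (by grind) (by grind))⟩⟩
  · rintro ⟨hH, hL⟩
    exact ⟨fun i h₀ hn => hH.nonempty_iso ⟨h₀, hn⟩, fun i hi => hH.isZero (by grind),
      fun j hj => homIsLine_iff_finrank_eq_one.2 (hL.finrank_eq_one hj),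
      fun j hj₀ hj₁ φ => (hL.subsingleton (by grind)).elim φ 0⟩

lemma GoodBase.isTypeA_zero (hA : GoodBase k A) : IsTypeA k A 0 ((singleFunctor C 0).obj A) := by
  refine isTypeA_iff.2 ⟨?_, by simpa using hA.homLinesOn⟩
  simpa using homologyConstOn_singleFunctor A 0

lemma IsTypeA.exists_succ (hA : GoodBase k A) (hX : IsTypeA k A n X) :
    ∃ Y, IsTypeA k A (n + 1) Y := by
  obtain ⟨hXH, hXL⟩ := isTypeA_iff.1 hX
  obtain ⟨f, φ, hφ⟩ := hXL.exists_comp_shift_map_ne_zero (m := n + 2) (by simp)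
  obtain ⟨Y, g, d, hT⟩ := Pretriangulated.distinguished_cocone_triangle f
  have hSH := (homologyConstOn_singleFunctor A 0).shift (t := {(n : ℤ) + 1 + 1})
    (-((n : ℤ) + 2)) (by grind)
  have hSL := hA.homLinesOn.shift (t := {(n : ℤ) + 2, (n : ℤ) + 3 + 1}) (-((n : ℤ) + 2)) (by grind)
  have hYH := HomologyConstOn.obj₃ hT hSH hXH (by simp) (by simp)
  have hYL := HomLinesOn.obj₃ hT hSL hXL (by simp) (by grind) (by grind) (by grind) hφ
  have hIcc : insert ((n : ℤ) + 1) (Set.Icc 0 (n : ℤ)) = Set.Icc 0 ((n + 1 : ℕ) : ℤ) := by grind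
  have hpair : insert ((n : ℤ) + 3) (({0, (n : ℤ) + 2} : Set ℤ) \ {(n : ℤ) + 2}) =
      {0, ((n + 1 : ℕ) : ℤ) + 2} := by grind
  exact ⟨Y, isTypeA_iff.2 ⟨hIcc ▸ hYH, hpair ▸ hYL⟩⟩

end Comparison

/-- **Lemma 3.4 (existence part).** If `A` satisfies the hypotheses (3.3), then for every
`n ∈ ℕ` there exists an object of type `Aₙ` in the derived category of `C`. -/
theorem stmt4 (A : C) (hA : GoodBase k A) (n : ℕ) :
    ∃ X : DerivedCategory C, IsTypeA k A n X := by
  induction n with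
  | zero => exact ⟨_, hA.isTypeA_zero⟩
  | succ n ih =>
    obtain ⟨X, hX⟩ := ih
    exact hX.exists_succ hA

end ThreeCusps
end

section
/- Let k be a field and C a k-linear abelian category, and let A be an object of C with Hom(A,A) and Ext^2(A,A) one-dimensional over k and Ext^i(A,A) = 0 for all i ≥ 1 with i ≠ 2. Then for every n ∈ ℕ the object of type A_n is unique up to isomorphism: any two objects X, X' of D^b(C) of type A_n are isomorphic. (Uniqueness part of Lemma 3.4.) -/
open CategoryTheory Limits

namespace ThreeCusps

variable (k : Type*) [Field k]
variable {C : Type*} [Category C] [Abelian C] [CategoryTheory.Linear k C]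
  [HasDerivedCategory C]

/-!
An object with cohomology `A` in the degrees `0, …, n` is an iterated extension: truncation gives a
triangle `A ⟶ X ⟶ Z ⟶ A⟦1⟧` in which `Z⟦1⟧` is again such an object, with one layer fewer. If
`Hom(A, X⟦1⟧) = 0`, composition with the connecting morphism `Z ⟶ A⟦1⟧` is injective on
`Hom(A, Z⟦1⟧)`, and since `Extʲ(A, A) = 0` for `j ≥ 3` the connecting morphism is determined by its
restriction to the bottom layer `A⟦-1⟧` of `Z`, an element of `Ext²(A, A)`. For a second object `X'`
one has `Z ≅ Z'` by induction, and the two elements of `Ext²(A, A)` obtained in this way are both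
zero or both nonzero by injectivity; hence they differ by an automorphism of `A`, which extends to
an isomorphism of the two triangles.
-/

section Pretriangulated

open Pretriangulated

variable {D : Type*} [Category D] [HasShift D ℤ]

theorem subsingleton_hom_of_shift (a : ℤ) {W B : D} (h : Subsingleton (W⟦a⟧ ⟶ B⟦a⟧)) :
    Subsingleton (W ⟶ B) :=
  ⟨fun _ _ => (shiftFunctor D a).map_injective (h.elim _ _)⟩

theorem subsingleton_hom_shift_shift_iff {a b c : ℤ} (h : a + b = c) {W B : D} :
    Subsingleton (W ⟶ B⟦a⟧⟦b⟧) ↔ Subsingleton (W ⟶ B⟦c⟧) :=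
  ((shiftFunctorAdd' D a b c h).app B).homToEquiv.symm.subsingleton_congr

variable [Preadditive D]

/-- Automorphisms of `B` act transitively on the nonzero elements of `Hom(A, B[j])`. This is the
form in which one-dimensionality of `Ext²(A, A)` enters the uniqueness argument. -/
def IsAutTransitive (A B : D) (j : ℤ) : Prop :=
  ∀ x y : A ⟶ B⟦j⟧, x ≠ 0 → y ≠ 0 → ∃ u : B ≅ B, x ≫ u.hom⟦j⟧' = y

theorem IsAutTransitive.exists_shift_shift_eq {A B : D} {a b c : ℤ} (h : IsAutTransitive A B c)
    (habc : a + b = c) {x y : A ⟶ B⟦a⟧⟦b⟧} (hxy : x = 0 ↔ y = 0) :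
    ∃ u : B ≅ B, x ≫ u.hom⟦a⟧'⟦b⟧' = y := by
  by_cases hx : x = 0
  · exact ⟨Iso.refl B, by rw [hxy.1 hx, hx, zero_comp]⟩
  · let e := shiftFunctorAdd' D a b c habc
    obtain ⟨u, hu⟩ := h (x ≫ e.inv.app B) (y ≫ e.inv.app B)
      (by simpa using hx) (by simpa using mt hxy.2 hx)
    refine ⟨u, ?_⟩
    rw [← cancel_mono (e.inv.app B), ← hu, Category.assoc, Category.assoc]
    exact congrArg (x ≫ ·) (e.inv.naturality u.hom)

variable [HasZeroObject D] [∀ j : ℤ, (shiftFunctor D j).Additive] [Pretriangulated D]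

section DistTriang

variable {P Q R : D} {f : P ⟶ Q} {g : Q ⟶ R} {d : R ⟶ P⟦(1 : ℤ)⟧}

theorem comp_shift_mor₃_eq_zero_iff (hT : Triangle.mk f g d ∈ distTriang D) {W : D} {j : ℤ}
    (hW : Subsingleton (W ⟶ Q⟦j⟧)) {φ : W ⟶ R⟦j⟧} : φ ≫ d⟦j⟧' = 0 ↔ φ = 0 := by
  let F := preadditiveCoyoneda.obj (Opposite.op W)
  have hQ : IsZero ((F.shift j).obj Q) :=
    @AddCommGrpCat.isZero_of_subsingleton ((F.shift j).obj Q) hW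
  have hmono : Mono ((F.shift j).map d) :=
    (F.homologySequence_mono_shift_map_mor₂_iff _ (rot_of_distTriang _ hT) j).2
      (hQ.eq_of_src _ _)
  exact ((AddCommGrpCat.mono_iff_injective _).1 hmono).eq_iff' zero_comp

theorem eq_of_mor₁_comp_eq (hT : Triangle.mk f g d ∈ distTriang D) {B : D}
    (hR : Subsingleton (R ⟶ B)) {φ φ' : Q ⟶ B} (h : f ≫ φ = f ≫ φ') : φ = φ' := by
  obtain ⟨χ, hχ⟩ : ∃ χ : R ⟶ B, φ - φ' = g ≫ χ := Triangle.yoneda_exact₂ _ hT (φ - φ')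
    ((Preadditive.comp_sub ..).trans (sub_eq_zero.2 h))
  rw [← sub_eq_zero, hχ, Subsingleton.elim χ 0, comp_zero]

end DistTriang

/-- `X` is an iterated extension of `A, A[-1], …, A[1 - n]`, with `A` mapping to `X` at each stage.
The third vertex of the triangle is shifted by one so that all stages have the same bottom
layer `A`. -/
inductive IsShiftTower (A : D) : ℕ → D → Prop
  | zero {X : D} (hX : IsZero X) : IsShiftTower A 0 X
  | succ {n : ℕ} {X Z : D} {f : A ⟶ X} {g : X ⟶ Z} {d : Z ⟶ A⟦(1 : ℤ)⟧}
      (hT : Triangle.mk f g d ∈ distTriang D) (hZ : IsShiftTower A n (Z⟦(1 : ℤ)⟧)) :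
      IsShiftTower A (n + 1) X

namespace IsShiftTower

variable {A : D} {n : ℕ}

theorem subsingleton_hom {X B : D} (hX : IsShiftTower A n X) {m : ℤ}
    (hB : ∀ j : ℤ, m ≤ j → Subsingleton (A ⟶ B⟦j⟧)) {j : ℤ} (hj : m ≤ j) :
    Subsingleton (X ⟶ B⟦j⟧) := by
  induction hX generalizing j with
  | zero hX => exact ⟨hX.eq_of_src⟩
  | @succ _ _ Z _ _ _ hT _ ih =>
    have hZB : Subsingleton (Z ⟶ B⟦j⟧) :=
      subsingleton_hom_of_shift 1
        ((subsingleton_hom_shift_shift_iff rfl).2 (ih (j := j + 1) (by lia)))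
    exact ⟨fun φ φ' => eq_of_mor₁_comp_eq hT hZB ((hB j hj).elim _ _)⟩

theorem eq_of_comp_shift_eq {Z W B : D} {i : A ⟶ Z⟦(1 : ℤ)⟧} {p : Z⟦(1 : ℤ)⟧ ⟶ W}
    {q : W ⟶ A⟦(1 : ℤ)⟧} (hT : Triangle.mk i p q ∈ distTriang D)
    (hW : IsShiftTower A n (W⟦(1 : ℤ)⟧)) (hB : ∀ j : ℤ, 2 ≤ j → Subsingleton (A ⟶ B⟦j⟧))
    {δ δ' : Z ⟶ B} (h : i ≫ δ⟦(1 : ℤ)⟧' = i ≫ δ'⟦(1 : ℤ)⟧') : δ = δ' := by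
  have hWB : Subsingleton (W ⟶ B⟦(1 : ℤ)⟧) :=
    subsingleton_hom_of_shift 1
      ((subsingleton_hom_shift_shift_iff rfl).2 (hW.subsingleton_hom hB le_rfl))
  exact (shiftFunctor D (1 : ℤ)).map_injective (eq_of_mor₁_comp_eq hT hWB h)

variable {X X' Z Z' : D} {f : A ⟶ X} {g : X ⟶ Z} {d : Z ⟶ A⟦(1 : ℤ)⟧}
  {f' : A ⟶ X'} {g' : X' ⟶ Z'} {d' : Z' ⟶ A⟦(1 : ℤ)⟧}

theorem exists_iso_comm (hA₂ : IsAutTransitive A A 2)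
    (hA₃ : ∀ j : ℤ, 3 ≤ j → Subsingleton (A ⟶ A⟦j⟧))
    (hT : Triangle.mk f g d ∈ distTriang D) (hT' : Triangle.mk f' g' d' ∈ distTriang D)
    (hZ : IsShiftTower A n (Z⟦(1 : ℤ)⟧))
    (hX : n ≠ 0 → Subsingleton (A ⟶ X⟦(1 : ℤ)⟧)) (hX' : n ≠ 0 → Subsingleton (A ⟶ X'⟦(1 : ℤ)⟧))
    (φ : Z ≅ Z') :
    ∃ u : A ≅ A, d ≫ u.hom⟦(1 : ℤ)⟧' = φ.hom ≫ d' := by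
  cases hZ with
  | zero hZ =>
    exact ⟨Iso.refl A, (shiftFunctor D (1 : ℤ)).map_injective (hZ.eq_of_src _ _)⟩
  | @succ n _ W i p q hTi hW =>
    have hd : i ≫ d⟦(1 : ℤ)⟧' = 0 ↔ i = 0 := comp_shift_mor₃_eq_zero_iff hT (hX (by simp))
    have hd' : i ≫ (φ.hom ≫ d')⟦(1 : ℤ)⟧' = 0 ↔ i = 0 := by
      rw [Functor.map_comp, ← Category.assoc,
        comp_shift_mor₃_eq_zero_iff hT' (hX' (by simp)), Preadditive.IsIso.comp_right_eq_zero]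
    obtain ⟨u, hu⟩ := hA₂.exists_shift_shift_eq (by norm_num) (hd.trans hd'.symm)
    refine ⟨u, eq_of_comp_shift_eq hTi hW (fun j hj => ?_) ?_⟩
    · exact (subsingleton_hom_shift_shift_iff rfl).2 (hA₃ _ (by lia))
    · rw [Functor.map_comp, ← Category.assoc, hu]

theorem subsingleton_hom_shift_cone (hA₃ : ∀ j : ℤ, 3 ≤ j → Subsingleton (A ⟶ A⟦j⟧))
    (hT : Triangle.mk f g d ∈ distTriang D) {j : ℤ} (hj : 1 ≤ j)
    (hX : Subsingleton (A ⟶ X⟦1 + j⟧)) : Subsingleton (A ⟶ Z⟦(1 : ℤ)⟧⟦j⟧) := by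
  rw [subsingleton_hom_shift_shift_iff rfl]
  have hA : Subsingleton (A ⟶ A⟦(1 : ℤ)⟧⟦1 + j⟧) :=
    (subsingleton_hom_shift_shift_iff rfl).2 (hA₃ _ (by lia))
  exact subsingleton_of_forall_eq 0 fun φ =>
    (comp_shift_mor₃_eq_zero_iff hT hX).1 (Subsingleton.elim (α := A ⟶ A⟦(1 : ℤ)⟧⟦1 + j⟧) _ _)

theorem nonempty_iso (hA₂ : IsAutTransitive A A 2)
    (hA₃ : ∀ j : ℤ, 3 ≤ j → Subsingleton (A ⟶ A⟦j⟧))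
    (hX : IsShiftTower A n X) (hX' : IsShiftTower A n X')
    (h : ∀ j : ℤ, 1 ≤ j → j < n → Subsingleton (A ⟶ X⟦j⟧))
    (h' : ∀ j : ℤ, 1 ≤ j → j < n → Subsingleton (A ⟶ X'⟦j⟧)) : Nonempty (X ≅ X') := by
  induction hX generalizing X' with
  | zero hX =>
    cases hX' with
    | zero hX' => exact ⟨hX.iso hX'⟩
  | @succ n X Z f g d hT hZ ih =>
    cases hX' with
    | @succ _ _ Z' f' g' d' hT' hZ' =>
      obtain ⟨e⟩ := ih hZ'
        (fun j hj hjn => subsingleton_hom_shift_cone hA₃ hT hj (h _ (by lia) (by lia)))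
        (fun j hj hjn => subsingleton_hom_shift_cone hA₃ hT' hj (h' _ (by lia) (by lia)))
      let φ : Z ≅ Z' := (shiftFunctor D (1 : ℤ)).preimageIso e
      obtain ⟨u, hu⟩ := exists_iso_comm hA₂ hA₃ hT hT' hZ
        (fun hn => h 1 le_rfl (by lia)) (fun hn => h' 1 le_rfl (by lia)) φ
      exact ⟨Triangle.π₂.mapIso (isoTriangleOfIso₁₃ _ _ hT hT' u φ hu)⟩

end IsShiftTower

end Pretriangulated

section DerivedCategory

open DerivedCategory Pretriangulated

theorem isIso_homologyFunctor_map_mor₁ {T : Triangle (DerivedCategory C)} (hT : T ∈ distTriang _)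
    (i : ℤ) (h : IsZero ((homologyFunctor C (i - 1)).obj T.obj₃))
    (h' : IsZero ((homologyFunctor C i).obj T.obj₃)) :
    IsIso ((homologyFunctor C i).map T.mor₁) := by
  have := (HomologySequence.mono_homologyMap_mor₁_iff T hT (i - 1) i).2 (h.eq_of_src _ _)
  have := (HomologySequence.epi_homologyMap_mor₁_iff T hT i).2 (h'.eq_of_tgt _ _)
  exact isIso_of_mono_of_epi _

theorem isIso_homologyFunctor_map_mor₂ {T : Triangle (DerivedCategory C)} (hT : T ∈ distTriang _)
    (i : ℤ) (h : IsZero ((homologyFunctor C i).obj T.obj₁))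
    (h' : IsZero ((homologyFunctor C (i + 1)).obj T.obj₁)) :
    IsIso ((homologyFunctor C i).map T.mor₂) := by
  have := (HomologySequence.mono_homologyMap_mor₂_iff T hT i).2 (h.eq_of_src _ _)
  have := (HomologySequence.epi_homologyMap_mor₂_iff T hT i (i + 1)).2 (h'.eq_of_tgt _ _)
  exact isIso_of_mono_of_epi _

theorem exists_distTriang_singleFunctor_of_isGE (X : DerivedCategory C) (m : ℤ) [X.IsGE m]
    {A : C} (a : (homologyFunctor C m).obj X ≅ A) :
    ∃ (Z : DerivedCategory C) (f : (singleFunctor C m).obj A ⟶ X) (g : X ⟶ Z)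
      (d : Z ⟶ ((singleFunctor C m).obj A)⟦(1 : ℤ)⟧),
      Triangle.mk f g d ∈ distTriang _ ∧ Z.IsGE (m + 1) := by
  obtain ⟨Y, Z, hY, hZ, f, g, d, hT⟩ := TStructure.t.exists_triangle X m (m + 1) rfl
  have : Y.IsLE m := ⟨hY⟩
  have : Z.IsGE (m + 1) := ⟨hZ⟩
  have hf (i : ℤ) (hi : i ≤ m) : IsIso ((homologyFunctor C i).map f) :=
    isIso_homologyFunctor_map_mor₁ hT i (isZero_of_isGE Z (m + 1) _ (by lia))
      (isZero_of_isGE Z (m + 1) _ (by lia))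
  have : Y.IsGE m := (isGE_iff Y m).2 fun i hi =>
    have := hf i hi.le
    (isZero_of_isGE X m i hi).of_iso (asIso ((homologyFunctor C i).map f))
  obtain ⟨B, ⟨e⟩⟩ := exists_iso_singleFunctor_obj_of_isGE_of_isLE Y m
  have := hf m le_rfl
  let b : B ≅ A := ((singleFunctorCompHomologyFunctorIso C m).app B).symm ≪≫
    (homologyFunctor C m).mapIso e.symm ≪≫ asIso ((homologyFunctor C m).map f) ≪≫ a
  let u : (singleFunctor C m).obj A ≅ Y := (singleFunctor C m).mapIso b.symm ≪≫ e.symm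
  have hd : (d ≫ u.inv⟦(1 : ℤ)⟧') ≫ u.hom⟦(1 : ℤ)⟧' = d := by
    rw [Category.assoc, ← Functor.map_comp, u.inv_hom_id, CategoryTheory.Functor.map_id,
      Category.comp_id]
  refine ⟨Z, u.hom ≫ f, g, d ≫ u.inv⟦(1 : ℤ)⟧', ?_, inferInstance⟩
  exact isomorphic_distinguished _ hT _ (Triangle.isoMk _ _ u (Iso.refl _) (Iso.refl _)
    (Category.comp_id _) ((Category.comp_id _).trans (Category.id_comp _).symm)
    (hd.trans (Category.id_comp d).symm))

/-- The cohomology of `X` is `A` in the degrees `0, …, n - 1` and zero elsewhere.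
The parameter `n` counts the nonzero degrees, one more than in `IsTypeA`, so that inductions start
at the zero object. -/
def HasConstantHomology (A : C) (n : ℕ) (X : DerivedCategory C) : Prop :=
  (∀ i : ℤ, 0 ≤ i → i < n → Nonempty ((homologyFunctor C i).obj X ≅ A)) ∧
    ∀ i : ℤ, (i < 0 ∨ n ≤ i) → IsZero ((homologyFunctor C i).obj X)

namespace HasConstantHomology

variable {A : C} {n : ℕ} {X : DerivedCategory C}

theorem isZero (hX : HasConstantHomology A 0 X) : IsZero X := by
  have : X.IsLE 0 := (isLE_iff X 0).2 fun i hi => hX.2 i (by lia)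
  have : X.IsGE 1 := (isGE_iff X 1).2 fun i hi => hX.2 i (by lia)
  exact TStructure.t.isZero X 0 1

theorem shift_cone {Z : DerivedCategory C} [Z.IsGE 1] {f : (singleFunctor C 0).obj A ⟶ X}
    {g : X ⟶ Z} {d : Z ⟶ ((singleFunctor C 0).obj A)⟦(1 : ℤ)⟧}
    (hX : HasConstantHomology A (n + 1) X) (hT : Triangle.mk f g d ∈ distTriang _) :
    HasConstantHomology A n (Z⟦(1 : ℤ)⟧) := by
  let shiftIso (i : ℤ) :
      (homologyFunctor C i).obj (Z⟦(1 : ℤ)⟧) ≅ (homologyFunctor C (1 + i)).obj Z :=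
    ((homologyFunctor C 0).shiftIso 1 i (1 + i) rfl).app Z
  have hg (i : ℤ) (hi : 1 ≤ i) : IsIso ((homologyFunctor C i).map g) :=
    isIso_homologyFunctor_map_mor₂ hT i
      (isZero_of_isLE ((singleFunctor C 0).obj A) 0 _ (by lia))
      (isZero_of_isLE ((singleFunctor C 0).obj A) 0 _ (by lia))
  constructor
  · intro i hi hin
    obtain ⟨a⟩ := hX.1 (1 + i) (by lia) (by lia)
    have := hg (1 + i) (by lia)
    exact ⟨shiftIso i ≪≫ (asIso ((homologyFunctor C (1 + i)).map g)).symm ≪≫ a⟩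
  · rintro i (hi | hi)
    · exact (isZero_of_isGE Z 1 (1 + i) (by lia)).of_iso (shiftIso i)
    · have := hg (1 + i) (by lia)
      exact (hX.2 (1 + i) (by lia)).of_iso
        (shiftIso i ≪≫ (asIso ((homologyFunctor C (1 + i)).map g)).symm)

theorem isShiftTower (hX : HasConstantHomology A n X) :
    IsShiftTower ((singleFunctor C 0).obj A) n X := by
  induction n generalizing X with
  | zero => exact .zero hX.isZero
  | succ n ih =>
    have : X.IsGE 0 := (isGE_iff X 0).2 fun i hi => hX.2 i (.inl hi)
    obtain ⟨a⟩ := hX.1 0 le_rfl (by lia)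
    obtain ⟨Z, f, g, d, hT, hZ⟩ := exists_distTriang_singleFunctor_of_isGE X 0 a
    rw [zero_add] at hZ
    exact .succ hT (ih (hX.shift_cone hT))

end HasConstantHomology

theorem stmt5_general {A : C}
    (hA₂ : IsAutTransitive ((singleFunctor C 0).obj A) ((singleFunctor C 0).obj A) 2)
    (hA₃ : ∀ j : ℤ, 3 ≤ j →
      ∀ φ : (singleFunctor C 0).obj A ⟶ ((singleFunctor C 0).obj A)⟦j⟧, φ = 0)
    {n : ℕ} {X X' : DerivedCategory C}
    (hX : HasConstantHomology A n X) (hX' : HasConstantHomology A n X')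
    (h : ∀ j : ℤ, 1 ≤ j → j < n → ∀ φ : (singleFunctor C 0).obj A ⟶ X⟦j⟧, φ = 0)
    (h' : ∀ j : ℤ, 1 ≤ j → j < n → ∀ φ : (singleFunctor C 0).obj A ⟶ X'⟦j⟧, φ = 0) :
    Nonempty (X ≅ X') :=
  hX.isShiftTower.nonempty_iso hA₂ (fun j hj => subsingleton_of_forall_eq 0 (hA₃ j hj))
    hX'.isShiftTower (fun j hj hjn => subsingleton_of_forall_eq 0 (h j hj hjn))
    (fun j hj hjn => subsingleton_of_forall_eq 0 (h' j hj hjn))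

variable {k}

theorem HomIsLine.isAutTransitive {A : C} {Y : DerivedCategory C} {j : ℤ}
    (h : HomIsLine k A (Y⟦j⟧)) : IsAutTransitive ((singleFunctor C 0).obj A) Y j := by
  obtain ⟨e, -, he⟩ := h
  intro x y hx hy
  obtain ⟨a, rfl⟩ := he x
  obtain ⟨b, rfl⟩ := he y
  have ha : a ≠ 0 := by rintro rfl; simp at hx
  have hb : b ≠ 0 := by rintro rfl; simp at hy
  have hc : b * a⁻¹ ≠ 0 := mul_ne_zero hb (inv_ne_zero ha)
  let u : Y ≅ Y :=
    { hom := (b * a⁻¹) • 𝟙 Y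
      inv := (b * a⁻¹)⁻¹ • 𝟙 Y
      hom_inv_id := by
        rw [Linear.smul_comp, Category.id_comp, smul_smul, mul_inv_cancel₀ hc, one_smul]
      inv_hom_id := by
        rw [Linear.smul_comp, Category.id_comp, smul_smul, inv_mul_cancel₀ hc, one_smul] }
  refine ⟨u, ?_⟩
  simp [u, Functor.map_smul, smul_smul, ha]

theorem GoodBase.eq_zero {A : C} (hA : GoodBase k A) (j : ℤ) (hj : 3 ≤ j)
    (φ : (singleFunctor C 0).obj A ⟶ ((singleFunctor C 0).obj A)⟦j⟧) : φ = 0 := by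
  lift j to ℕ using by lia
  exact hA.2.2 j (by lia) (by lia) φ

theorem IsTypeA.hasConstantHomology {A : C} {n : ℕ} {X : DerivedCategory C}
    (hX : IsTypeA k A n X) : HasConstantHomology A (n + 1) X :=
  ⟨fun i hi hin => hX.1 i hi (by lia), fun i hi => hX.2.1 i (by lia)⟩

theorem IsTypeA.eq_zero {A : C} {n : ℕ} {X : DerivedCategory C} (hX : IsTypeA k A n X) (j : ℤ)
    (hj : 1 ≤ j) (hjn : j < (n + 1 : ℕ)) (φ : (singleFunctor C 0).obj A ⟶ X⟦j⟧) : φ = 0 :=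
  hX.2.2.2 j (by lia) (by lia) φ

end DerivedCategory

/-- **Lemma 3.4 (uniqueness part).** If `A` satisfies the hypotheses (3.3), then for every
`n ∈ ℕ`, any two objects of type `Aₙ` in the derived category of `C` are isomorphic. -/
theorem stmt5 (A : C) (hA : GoodBase k A) (n : ℕ)
    (X X' : DerivedCategory C) (hX : IsTypeA k A n X) (hX' : IsTypeA k A n X') :
    Nonempty (X ≅ X') :=
  stmt5_general hA.2.1.isAutTransitive hA.eq_zero hX.hasConstantHomology
    hX'.hasConstantHomology hX.eq_zero hX'.eq_zero

end ThreeCusps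
end

section
/- Let {(n_i, d_i, s_i)}_{i∈I} be a finite family with n_i, d_i ∈ ℕ∖{0} and s_i ∈ ℤ, for each i let X_i be an object of D^b(C) of type A_{n_i}, and set B = ⊕_{i∈I} X_i^{⊕ d_i}[s_i]. Let s = max_{i∈I}(n_i − s_i), which is the maximal degree with H^s(B) ≠ 0, and let J = {i ∈ I : n_i − s_i = s}. The decomposition induces an isomorphism H^s(B) ≅ ⊕_{j∈J} A^{d_j}, and since Hom(A,A) = k·id, the k-algebra End(H^s(B)) identifies with the algebra of block matrices M = (M_{jk})_{j,k∈J}, where M_{jk} is the d_j × d_k matrix over k recording the component from the j-th summand to the k-th summand. Then: (1) every block matrix M with M_{jk} = 0 whenever n_k > n_j is induced, via the functor H^s, by some endomorphism of B; (2) every invertible such block matrix is induced by an automorphism of B. (Lemma 3.5.) -/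
open CategoryTheory Limits

attribute [local instance] CategoryTheory.Abelian.hasFiniteBiproducts

/-!
Put `E = A[0]`. Shifted so that its top cohomology lies in degree `0`, an object of type `Aₙ` is an
iterated extension of `E, E⟦1⟧, …, E⟦n⟧`: a tower of height `n` over its last quotient `E`, no step
of which splits. Since `Ext³(A, A) = Ext⁴(A, A) = ⋯ = 0`, the morphism `X' ⟶ E` from a tower `X'`
embeds `Hom(E, X'⟦2⟧)` into the line `Hom(E, E⟦2⟧)`, so up to a scalar there is only one way to
build a tower on top of `X'`. Hence towers of the same height are isomorphic over `E`, and a tower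
maps over `E` to every lower one. Choosing such morphisms between towers of consecutive heights
gives a functor from `ℕᵒᵖ`, which `H⁰` sends to the constant functor `A`.

Through this functor, a matrix whose nonzero entries go from higher to lower towers acts on the sum
of the summands of `B` which contribute to the top cohomology, and products of such matrices act by
composition. As the inverse of a triangular matrix is triangular, invertible matrices act by
automorphisms. On the other summands of `B` one takes the identity.
-/

open Pretriangulated

section Tower

variable {D : Type*} [Category D] [Preadditive D] [HasZeroObject D] [HasShift D ℤ]
  [∀ n : ℤ, (shiftFunctor D n).Additive] [Pretriangulated D] {E : D}

/-- A tower of height `n` over `E` is an iterated extension of `E, E⟦1⟧, …, E⟦n⟧`, regarded as an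
object over its last quotient `E`: a tower of height `n + 1` is an extension of `E` by the shift
`X'⟦1⟧` of a tower `X'` of height `n`. The last condition says that the class of the extension does
not die in `Hom(E, E⟦2⟧)`, so that no step of the tower splits. -/
inductive IsTower (E : D) : ℕ → Over E → Prop
  | zero (X : Over E) [IsIso X.hom] : IsTower E 0 X
  | succ {n : ℕ} {X' X : Over E} {i : X'.left⟦(1 : ℤ)⟧ ⟶ X.left}
      {δ : E ⟶ X'.left⟦(1 : ℤ)⟧⟦(1 : ℤ)⟧} (hX' : IsTower E n X')
      (hT : Triangle.mk i X.hom δ ∈ distTriang D)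
      (hδ : δ ≫ X'.hom⟦(1 : ℤ)⟧'⟦(1 : ℤ)⟧' ≠ 0) : IsTower E (n + 1) X

lemma eq_zero_of_comp_shift_mor₂_eq_zero {T : Triangle D} (hT : T ∈ distTriang D) {j : ℤ}
    (h₁ : Subsingleton (E ⟶ T.obj₁⟦j⟧)) {φ : E ⟶ T.obj₂⟦j⟧} (hφ : φ ≫ T.mor₂⟦j⟧' = 0) :
    φ = 0 := by
  obtain ⟨ψ, hψ⟩ := Triangle.coyoneda_exact₂ _ (Triangle.shift_distinguished T hT j) φ (by
    change φ ≫ (j.negOnePow • T.mor₂⟦j⟧') = 0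
    rw [Linear.comp_units_smul, hφ, smul_zero])
  have hψ0 : ψ = 0 := h₁.elim ψ 0
  rw [hψ, hψ0]
  exact zero_comp

lemma subsingleton_hom_shift_obj₂ {T : Triangle D} (hT : T ∈ distTriang D) {j : ℤ}
    (h₁ : Subsingleton (E ⟶ T.obj₁⟦j⟧)) (h₃ : Subsingleton (E ⟶ T.obj₃⟦j⟧)) :
    Subsingleton (E ⟶ T.obj₂⟦j⟧) :=
  subsingleton_of_forall_eq 0 fun _ => eq_zero_of_comp_shift_mor₂_eq_zero hT h₁ (h₃.elim _ _)

namespace IsTower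

lemma subsingleton_hom_shift (h3 : ∀ j : ℤ, 3 ≤ j → Subsingleton (E ⟶ E⟦j⟧)) {n : ℕ} {X : Over E}
    (hX : IsTower E n X) {j : ℤ} (hj : 3 ≤ j) : Subsingleton (E ⟶ X.left⟦j⟧) := by
  induction hX generalizing j with
  | zero X =>
    have := h3 j hj
    exact ((shiftFunctor D j).mapIso (asIso X.hom)).homToEquiv.subsingleton
  | @succ _ X' _ _ _ _ hT _ ih =>
    have := ih (j := 1 + j) (by lia)
    exact subsingleton_hom_shift_obj₂ hT
      ((shiftFunctorAdd' D 1 j (1 + j) rfl).app X'.left).homToEquiv.symm.subsingleton (h3 j hj)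

lemma eq_zero_of_comp_eq_zero (h3 : ∀ j : ℤ, 3 ≤ j → Subsingleton (E ⟶ E⟦j⟧)) {n : ℕ} {X : Over E}
    (hX : IsTower E n X) (φ : E ⟶ X.left⟦(1 : ℤ)⟧⟦(1 : ℤ)⟧)
    (hφ : φ ≫ X.hom⟦(1 : ℤ)⟧'⟦(1 : ℤ)⟧' = 0) : φ = 0 := by
  cases hX with
  | zero => rwa [← cancel_mono (X.hom⟦(1 : ℤ)⟧'⟦(1 : ℤ)⟧'), zero_comp]
  | @succ _ X' _ _ _ hX' hT _ =>
    let e : X'.left⟦(3 : ℤ)⟧ ≅ X'.left⟦(1 : ℤ)⟧⟦(1 : ℤ)⟧⟦(1 : ℤ)⟧ :=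
      (shiftFunctorAdd' D 1 2 3 (by norm_num)).app _ ≪≫
        (shiftFunctorAdd' D 1 1 2 (by norm_num)).app _
    have := hX'.subsingleton_hom_shift h3 le_rfl
    refine eq_zero_of_comp_shift_mor₂_eq_zero (Triangle.shift_distinguished _ hT 1)
      e.homToEquiv.symm.subsingleton ?_
    change φ ≫ ((1 : ℤ).negOnePow • X.hom⟦(1 : ℤ)⟧')⟦(1 : ℤ)⟧' = 0
    simpa using hφ

lemma exists_succ (h3 : ∀ j : ℤ, 3 ≤ j → Subsingleton (E ⟶ E⟦j⟧)) (hE : ¬IsZero E) {n : ℕ}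
    {X' : Over E} (hX' : IsTower E n X') {T : Triangle D} (hT : T ∈ distTriang D)
    (e₁ : X'.left⟦(1 : ℤ)⟧ ≅ T.obj₁) (e₃ : T.obj₃ ≅ E) (h : Subsingleton (E ⟶ T.obj₂)) :
    ∃ t : T.obj₂ ⟶ E, IsTower E (n + 1) (Over.mk t) := by
  let t : T.obj₂ ⟶ E := T.mor₂ ≫ e₃.hom
  let δ : E ⟶ X'.left⟦(1 : ℤ)⟧⟦(1 : ℤ)⟧ := e₃.inv ≫ T.mor₃ ≫ e₁.inv⟦(1 : ℤ)⟧'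
  have comm₂ : t ≫ e₃.inv = 𝟙 _ ≫ T.mor₂ := by simp [t]
  have comm₃ : δ ≫ e₁.hom⟦(1 : ℤ)⟧' = e₃.inv ≫ T.mor₃ := by simp [δ, ← Functor.map_comp]
  have hT' : Triangle.mk (e₁.hom ≫ T.mor₁) t δ ∈ distTriang D :=
    isomorphic_distinguished _ hT _
      (Triangle.isoMk _ _ e₁ (Iso.refl _) e₃.symm (Category.comp_id _) comm₂ comm₃)
  -- If the class died in `Hom(E, E⟦2⟧)`, then `t` would have a section, but `Hom(E, T.obj₂) = 0`.
  refine ⟨t, .succ hX' hT' fun hδt => hE ?_⟩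
  have hδ : δ = 0 := hX'.eq_zero_of_comp_eq_zero h3 δ hδt
  obtain ⟨σ, hσ⟩ := Triangle.coyoneda_exact₃ _ hT' (𝟙 E) (by
    change 𝟙 E ≫ δ = 0
    rw [hδ, comp_zero])
  have hσ0 : σ = 0 := h.elim σ 0
  rw [IsZero.iff_id_eq_zero, hσ, hσ0]
  exact zero_comp

end IsTower

variable {k : Type*} [Field k] [Linear k D]

lemma exists_overHom_of_comp_eq_smul {X Y : Over E} {X₁ Y₁ : D} {i : X₁ ⟶ X.left}
    {δ : E ⟶ X₁⟦(1 : ℤ)⟧} {i' : Y₁ ⟶ Y.left} {δ' : E ⟶ Y₁⟦(1 : ℤ)⟧}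
    (hX : Triangle.mk i X.hom δ ∈ distTriang D) (hY : Triangle.mk i' Y.hom δ' ∈ distTriang D)
    (f : X₁ ⟶ Y₁) {c : k} (hc : c ≠ 0) (h : δ ≫ f⟦(1 : ℤ)⟧' = c • δ') :
    ∃ g : X ⟶ Y, IsIso f → IsIso g := by
  let e : E ≅ E := ⟨c • 𝟙 E, c⁻¹ • 𝟙 E, by simp [smul_smul, hc], by simp [smul_smul, hc]⟩
  have comm₃ : δ ≫ f⟦(1 : ℤ)⟧' = e.hom ≫ δ' := by simp [e, h]
  obtain ⟨b, comm₁, comm₂⟩ :=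
    complete_distinguished_triangle_morphism₂ _ _ hX hY f e.hom comm₃
  change X.left ⟶ Y.left at b
  change X.hom ≫ e.hom = b ≫ Y.hom at comm₂
  have hb : (c⁻¹ • b) ≫ Y.hom = X.hom := by
    rw [Linear.smul_comp, ← comm₂]
    simp [e, smul_smul, hc]
  refine ⟨Over.homMk _ hb, fun hf => ?_⟩
  have : IsIso b := isIso₂_of_isIso₁₃
    (Triangle.homMk (.mk i X.hom δ) (.mk i' Y.hom δ') f b e.hom comm₁ comm₂ comm₃) hX hY hf
    e.isIso_hom
  have : IsIso (c⁻¹ • b) := ⟨c • inv b, by simp [smul_smul, hc], by simp [smul_smul, hc]⟩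
  exact (Over.isoMk (asIso (c⁻¹ • b)) hb).isIso_hom

namespace IsTower

lemma exists_hom (h2 : Module.rank k (E ⟶ E⟦(1 : ℤ)⟧⟦(1 : ℤ)⟧) ≤ 1)
    (h3 : ∀ j : ℤ, 3 ≤ j → Subsingleton (E ⟶ E⟦j⟧)) {m n : ℕ} {X Y : Over E}
    (hX : IsTower E n X) (hY : IsTower E m Y) (hmn : m ≤ n) : ∃ f : X ⟶ Y, n = m → IsIso f := by
  induction hY generalizing n X with
  | zero Y =>
    refine ⟨Over.homMk (X.hom ≫ inv Y.hom), ?_⟩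
    rintro rfl
    cases hX
    exact (Over.isoMk (asIso (X.hom ≫ inv Y.hom))).isIso_hom
  | @succ m Y' Y _ δY hY' hTY hδY ih =>
    cases hX with
    | zero => simp at hmn
    | @succ n X' _ _ δX hX' hTX hδX =>
      obtain ⟨f, hf⟩ := ih hX' (by lia)
      obtain ⟨v, hv⟩ := rank_le_one_iff.1 h2
      obtain ⟨a, ha⟩ := hv (δX ≫ X'.hom⟦(1 : ℤ)⟧'⟦(1 : ℤ)⟧')
      obtain ⟨b, hb⟩ := hv (δY ≫ Y'.hom⟦(1 : ℤ)⟧'⟦(1 : ℤ)⟧')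
      have ha0 : a ≠ 0 := by rintro rfl; exact hδX (by rw [← ha, zero_smul])
      have hb0 : b ≠ 0 := by rintro rfl; exact hδY (by rw [← hb, zero_smul])
      have hcomp : δX ≫ f.left⟦(1 : ℤ)⟧'⟦(1 : ℤ)⟧' = (a / b) • δY := by
        rw [← sub_eq_zero]
        refine hY'.eq_zero_of_comp_eq_zero h3 _ ?_
        rw [Preadditive.sub_comp, Category.assoc, ← Functor.map_comp, ← Functor.map_comp, Over.w,
          ← ha, Linear.smul_comp, ← hb, smul_smul, div_mul_cancel₀ _ hb0, sub_self]
      obtain ⟨g, hg⟩ := exists_overHom_of_comp_eq_smul hTX hTY _ (div_ne_zero ha0 hb0) hcomp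
      refine ⟨g, fun hnm => hg ?_⟩
      have := hf (by lia)
      exact (Over.forget E ⋙ shiftFunctor D (1 : ℤ)).map_isIso f

lemma exists_of_le {m n : ℕ} {X : Over E} (hX : IsTower E n X) (hmn : m ≤ n) :
    ∃ Y : Over E, IsTower E m Y := by
  induction hX with
  | zero X => exact ⟨X, by simpa [Nat.le_zero.1 hmn] using IsTower.zero X⟩
  | @succ n _ X _ _ hX' hT hδ ih =>
    rcases hmn.lt_or_eq with hlt | rfl
    · exact ih (Nat.le_of_lt_succ hlt)
    · exact ⟨X, .succ hX' hT hδ⟩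

lemma nonempty_iso (h2 : Module.rank k (E ⟶ E⟦(1 : ℤ)⟧⟦(1 : ℤ)⟧) ≤ 1)
    (h3 : ∀ j : ℤ, 3 ≤ j → Subsingleton (E ⟶ E⟦j⟧)) {n : ℕ} {X Y : Over E}
    (hX : IsTower E n X) (hY : IsTower E n Y) : Nonempty (X ≅ Y) := by
  obtain ⟨f, hf⟩ := hX.exists_hom h2 h3 hY le_rfl
  have := hf rfl
  exact ⟨asIso f⟩

lemma exists_functor (h2 : Module.rank k (E ⟶ E⟦(1 : ℤ)⟧⟦(1 : ℤ)⟧) ≤ 1)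
    (h3 : ∀ j : ℤ, 3 ≤ j → Subsingleton (E ⟶ E⟦j⟧)) {N : ℕ} {X : Over E} (hX : IsTower E N X) :
    ∃ F : ℕᵒᵖ ⥤ Over E, ∀ n, IsTower E (min n N) (F.obj (.op n)) := by
  choose R hR using fun n => hX.exists_of_le (min_le_right n N)
  choose f _ using fun n => (hR (n + 1)).exists_hom h2 h3 (hR n) (by lia)
  exact ⟨Functor.ofOpSequence f, hR⟩

end IsTower

end Tower

section Derived

open DerivedCategory DerivedCategory.HomologySequence

variable {C : Type*} [Category C] [Abelian C] [HasDerivedCategory C]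

lemma isIso_homologyFunctor_map_mor₁ {T : Triangle (DerivedCategory C)} (hT : T ∈ distTriang _)
    {i j : ℤ} (hij : i + 1 = j) (hi : IsZero ((homologyFunctor C i).obj T.obj₃))
    (hj : IsZero ((homologyFunctor C j).obj T.obj₃)) :
    IsIso ((homologyFunctor C j).map T.mor₁) := by
  have := (epi_homologyMap_mor₁_iff T hT j).2 (hj.eq_of_tgt _ _)
  have := (mono_homologyMap_mor₁_iff T hT i j hij).2 (hi.eq_of_src _ _)
  exact isIso_of_mono_of_epi _

lemma isIso_homologyFunctor_map_mor₂ {T : Triangle (DerivedCategory C)} (hT : T ∈ distTriang _)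
    {i j : ℤ} (hij : i + 1 = j) (hi : IsZero ((homologyFunctor C i).obj T.obj₁))
    (hj : IsZero ((homologyFunctor C j).obj T.obj₁)) :
    IsIso ((homologyFunctor C i).map T.mor₂) := by
  have := (epi_homologyMap_mor₂_iff T hT i j hij).2 (hj.eq_of_tgt _ _)
  have := (mono_homologyMap_mor₂_iff T hT i).2 (hi.eq_of_src _ _)
  exact isIso_of_mono_of_epi _

namespace IsTower

variable {E : DerivedCategory C} [E.IsLE 0]

lemma isLE_left {n : ℕ} {X : Over E} (hX : IsTower E n X) : X.left.IsLE 0 := by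
  induction hX with
  | zero X => exact TStructure.t.isLE_of_iso (asIso X.hom).symm 0
  | @succ _ X' X _ _ _ hT _ ih =>
    have : (X'.left⟦(1 : ℤ)⟧).IsLE (-1) := TStructure.t.isLE_shift X'.left 0 1 (-1) (by norm_num)
    have : (X'.left⟦(1 : ℤ)⟧).IsLE 0 := TStructure.t.isLE_of_le _ (-1) 0
    exact TStructure.t.isLE₂ _ hT 0 ‹_› ‹_›

lemma isIso_homologyFunctor_map_hom {n : ℕ} {X : Over E} (hX : IsTower E n X) :
    IsIso ((homologyFunctor C 0).map X.hom) := by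
  cases hX with
  | zero => infer_instance
  | @succ n X' _ _ _ hX' hT _ =>
    have := hX'.isLE_left
    have : (X'.left⟦(1 : ℤ)⟧).IsLE (-1) := TStructure.t.isLE_shift X'.left 0 1 (-1) (by norm_num)
    exact isIso_homologyFunctor_map_mor₂ hT (zero_add 1)
      (isZero_of_isLE (X'.left⟦(1 : ℤ)⟧) (-1) 0 (by norm_num))
      (isZero_of_isLE (X'.left⟦(1 : ℤ)⟧) (-1) 1 (by norm_num))

end IsTower

lemma exists_iso_singleFunctor_obj_of_homology_iso {A : C} {X : DerivedCategory C} {n : ℤ}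
    [X.IsGE n] [X.IsLE n] (e : (homologyFunctor C n).obj X ≅ A) :
    Nonempty (X ≅ (singleFunctor C n).obj A) := by
  obtain ⟨Y, ⟨e'⟩⟩ := exists_iso_singleFunctor_obj_of_isGE_of_isLE X n
  exact ⟨e' ≪≫ (singleFunctor C n).mapIso
    (((singleFunctorCompHomologyFunctorIso C n).app Y).symm ≪≫
      ((homologyFunctor C n).mapIso e').symm ≪≫ e)⟩

lemma subsingleton_hom_of_isLE_of_isGE (X Y : DerivedCategory C) {a b : ℤ} (h : a < b) [X.IsLE a]
    [Y.IsGE b] : Subsingleton (X ⟶ Y) :=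
  subsingleton_of_forall_eq 0 fun f => TStructure.t.zero_of_isLE_of_isGE f a b h ‹_› ‹_›

lemma exists_truncation_triangle (X : DerivedCategory C) (n : ℤ) :
    ∃ (X' X'' : DerivedCategory C) (i : X' ⟶ X) (p : X ⟶ X'') (q : X'' ⟶ X'⟦(1 : ℤ)⟧),
      Triangle.mk i p q ∈ distTriang _ ∧ X'.IsLE n ∧ X''.IsGE (n + 1) ∧
      (∀ m ≤ n, IsIso ((homologyFunctor C m).map i)) ∧
      ∀ m, n < m → IsIso ((homologyFunctor C m).map p) := by
  have hT := TStructure.t.triangleLTGE_distinguished (n + 1) X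
  have hLE := TStructure.t.isLE_truncLT_obj X (n + 1) n
  have hGE := TStructure.t.isGE_truncGE_obj X (n + 1) (n + 1)
  refine ⟨_, _, _, _, _, hT, hLE, hGE, fun m hm => ?_, fun m hm => ?_⟩
  · exact isIso_homologyFunctor_map_mor₁ hT (sub_add_cancel m 1)
      (isZero_of_isGE _ (n + 1) _ (by lia)) (isZero_of_isGE _ (n + 1) _ (by lia))
  · exact isIso_homologyFunctor_map_mor₂ hT rfl
      (isZero_of_isLE (hX := hLE) _ n _ hm) (isZero_of_isLE (hX := hLE) _ n _ (by lia))

/-- The part of the definition of an object of type `Aₙ` on which the argument relies: the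
cohomology objects are those of type `Aₙ`, and `Hom(A, X⟦j⟧) = 0` for `0 < j ≤ n`. Unlike type `Aₙ`
itself, this notion is inherited by the truncations of `X`. -/
structure IsWeakTypeA (A : C) (n : ℕ) (X : DerivedCategory C) : Prop where
  nonempty_homology_iso (i : ℤ) (h₀ : 0 ≤ i) (hn : i ≤ n) :
    Nonempty ((homologyFunctor C i).obj X ≅ A)
  isZero_homology (i : ℤ) (hi : i < 0 ∨ n < i) : IsZero ((homologyFunctor C i).obj X)
  subsingleton_hom (j : ℤ) (h₀ : 0 < j) (hn : j ≤ n) :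
    Subsingleton ((singleFunctor C 0).obj A ⟶ X⟦j⟧)

namespace IsWeakTypeA

variable {A : C} {n : ℕ} {X : DerivedCategory C}

lemma isGE (hX : IsWeakTypeA A n X) : X.IsGE 0 :=
  (isGE_iff X 0).2 fun i hi => hX.isZero_homology i (.inl hi)

lemma isLE (hX : IsWeakTypeA A n X) : X.IsLE n :=
  (isLE_iff X n).2 fun i hi => hX.isZero_homology i (.inr hi)

lemma exists_distinguished (hX : IsWeakTypeA A (n + 1) X) :
    ∃ (X' X'' : DerivedCategory C) (i : X' ⟶ X) (p : X ⟶ X'') (q : X'' ⟶ X'⟦(1 : ℤ)⟧),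
      Triangle.mk i p q ∈ distTriang _ ∧ IsWeakTypeA A n X' ∧
      Nonempty (X'' ≅ (singleFunctor C (n + 1)).obj A) := by
  obtain ⟨X', X'', i, p, q, hT, hLE, hGE, hi, hp⟩ := exists_truncation_triangle X n
  refine ⟨X', X'', i, p, q, hT, ⟨fun m h₀ hm => ?_, fun m hm => ?_, fun j h₀ hj => ?_⟩, ?_⟩
  · obtain ⟨e⟩ := hX.nonempty_homology_iso m h₀ (by lia)
    have := hi m hm
    exact ⟨asIso ((homologyFunctor C m).map i) ≪≫ e⟩
  · by_cases hmn : m ≤ n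
    · have := hi m hmn
      exact (hX.isZero_homology m (by lia)).of_iso (asIso ((homologyFunctor C m).map i))
    · exact isZero_of_isLE _ n m (by lia)
  · have := TStructure.t.isGE_shift X'' (n + 1) (-1) (n + 2) (by lia)
    have := TStructure.t.isGE_shift (X''⟦(-1 : ℤ)⟧) (n + 2) j (n + 2 - j) (by lia)
    exact subsingleton_hom_shift_obj₂ (inv_rot_of_distTriang _ hT)
      (subsingleton_hom_of_isLE_of_isGE _ (X''⟦(-1 : ℤ)⟧⟦j⟧) (show 0 < n + 2 - j by lia))
      (hX.subsingleton_hom j h₀ (by lia))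
  · have hLE'' : X''.IsLE (n + 1) := (isLE_iff _ _).2 fun m hm => by
      have := hp m (by lia)
      exact (hX.isZero_homology m (.inr (by simpa using hm))).of_iso
        (asIso ((homologyFunctor C m).map p)).symm
    have := hp (n + 1) (by lia)
    obtain ⟨e⟩ := hX.nonempty_homology_iso (n + 1) (by lia) (by simp)
    exact exists_iso_singleFunctor_obj_of_homology_iso
      ((asIso ((homologyFunctor C (n + 1)).map p)).symm ≪≫ e)

lemma exists_isTower (hA : ¬IsZero A)
    (h3 : ∀ j : ℤ, 3 ≤ j →
      Subsingleton ((singleFunctor C 0).obj A ⟶ ((singleFunctor C 0).obj A)⟦j⟧))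
    (hX : IsWeakTypeA A n X) :
    ∃ t : X⟦(n : ℤ)⟧ ⟶ (singleFunctor C 0).obj A, IsTower _ n (Over.mk t) := by
  induction n generalizing X with
  | zero =>
    have := hX.isGE
    have : X.IsLE 0 := hX.isLE
    obtain ⟨e⟩ := hX.nonempty_homology_iso 0 le_rfl le_rfl
    obtain ⟨e'⟩ := exists_iso_singleFunctor_obj_of_homology_iso e
    let t := (shiftFunctorZero (DerivedCategory C) ℤ).app X ≪≫ e'
    have : IsIso (Over.mk t.hom).hom := t.isIso_hom
    exact ⟨t.hom, .zero _⟩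
  | succ n ih =>
    obtain ⟨X', X'', i, p, q, hT, hX', ⟨e⟩⟩ := hX.exists_distinguished
    obtain ⟨t', ht'⟩ := ih hX'
    have hE : ¬IsZero ((singleFunctor C 0).obj A) := fun h =>
      hA (IsZero.of_full_of_faithful_of_isZero (singleFunctor C 0) A h)
    let e₁ : (Over.mk t').left⟦(1 : ℤ)⟧ ≅ X'⟦((n + 1 : ℕ) : ℤ)⟧ :=
      ((shiftFunctorAdd' (DerivedCategory C) (n : ℤ) 1 (n + 1 : ℕ) (by simp)).app X').symm
    let e₃ : X''⟦((n + 1 : ℕ) : ℤ)⟧ ≅ (singleFunctor C 0).obj A :=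
      (shiftFunctor _ ((n + 1 : ℕ) : ℤ)).mapIso e ≪≫
        ((singleFunctors C).shiftIso (n + 1 : ℕ) 0 (n + 1) (by simp)).app A
    exact ht'.exists_succ h3 hE (Triangle.shift_distinguished _ hT ((n + 1 : ℕ) : ℤ)) e₁ e₃
      (hX.subsingleton_hom _ (by lia) le_rfl)

end IsWeakTypeA

end Derived

section HomologyLinear

variable (R : Type*) [Ring R] {C : Type*} [Category C] [Abelian C] [Linear R C]

instance homologicalComplex_homologyFunctor_linear {ι : Type*} (c : ComplexShape ι) (i : ι) :
    (HomologicalComplex.homologyFunctor C c i).Linear R where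
  map_smul f r :=
    ShortComplex.homologyMap_smul ((HomologicalComplex.shortComplexFunctor C c i).map f) r

instance derivedCategory_homologyFunctor_linear [HasDerivedCategory C] (n : ℤ) :
    (DerivedCategory.homologyFunctor C n).Linear R :=
  let W := HomologicalComplex.quasiIso C (.up ℤ)
  let H := HomologicalComplex.homologyFunctor C (.up ℤ) n
  let _ : Localization.Lifting DerivedCategory.Q W H (DerivedCategory.homologyFunctor C n) :=
    ⟨DerivedCategory.homologyFunctorFactors C n⟩
  (Localization.functor_linear_iff DerivedCategory.Q W R H _).1 inferInstance

end HomologyLinear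

section MapBiproduct

variable {D C : Type*} [Category D] [Category C] [Preadditive D] [Preadditive C]
  [HasFiniteBiproducts D] (H : D ⥤ C) [H.Additive] {J L : Type} [Finite J] [Finite L]

lemma exists_iso_map_biproduct [HasFiniteBiproducts C] {P : J → D} {Q : J → C}
    (θ : ∀ x, H.obj (P x) ≅ Q x) :
    ∃ φ : H.obj (⨁ P) ≅ ⨁ Q,
      (∀ x, biproduct.ι Q x ≫ φ.inv = (θ x).inv ≫ H.map (biproduct.ι P x)) ∧
      ∀ x, φ.hom ≫ biproduct.π Q x = H.map (biproduct.π P x) ≫ (θ x).hom := by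
  let μ : H.obj (⨁ P) ≅ ⨁ fun x => H.obj (P x) := H.mapBiproduct P
  have ι_μ (x : J) : biproduct.ι _ x ≫ μ.inv = H.map (biproduct.ι P x) := biproduct.ι_desc _ _
  have μ_π (x : J) : μ.hom ≫ biproduct.π _ x = H.map (biproduct.π P x) := biproduct.lift_π _ _
  refine ⟨μ ≪≫ biproduct.mapIso θ, fun x => ?_, fun x => ?_⟩
  · simp [ι_μ]
  · simp [reassoc_of% μ_π x]

lemma exists_retract_biproduct_comp {f : J → L} (hf : f.Injective) (P : L → D)
    (hP : ∀ y ∉ Set.range f, IsZero (H.obj (P y))) :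
    ∃ ρ : Retract (⨁ fun x => P (f x)) (⨁ P), IsIso (H.map ρ.r) := by
  classical
  have := Fintype.ofFinite J
  have := Fintype.ofFinite L
  let ρ : Retract (⨁ fun x => P (f x)) (⨁ P) :=
    { i := biproduct.desc fun x => biproduct.ι P (f x)
      r := biproduct.lift fun x => biproduct.π P (f x)
      retract := by
        ext x y
        by_cases h : y = x
        · subst h
          simp
        · simp [biproduct.ι_π_ne _ h, biproduct.ι_π_ne _ (hf.ne h)] }
  have hρ : H.map (ρ.r ≫ ρ.i) = 𝟙 _ := by
    rw [← H.map_id, ← biproduct.total, biproduct.lift_desc, H.map_sum, H.map_sum]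
    refine Finset.sum_of_injOn f hf.injOn (by simp) (fun y _ hy => ?_) fun _ _ => rfl
    rw [H.map_comp, (hP y (by simpa using hy)).eq_of_tgt (H.map (biproduct.π P y)) 0, zero_comp]
  exact ⟨ρ, H.map ρ.i, by rw [← H.map_comp, hρ], by rw [← H.map_comp, ρ.retract, H.map_id]⟩

lemma exists_retract_of_iso_biproduct {B : D} {P : L → D} (e : B ≅ ⨁ P) {f : J → L}
    (hf : f.Injective) {Q : J → D} (γ : ∀ x, Q x ≅ P (f x))
    (hP : ∀ y ∉ Set.range f, IsZero (H.obj (P y))) :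
    ∃ ρ : Retract (⨁ Q) B, IsIso (H.map ρ.r) := by
  obtain ⟨ρ, _⟩ := exists_retract_biproduct_comp H hf P hP
  refine ⟨((Retract.ofIso (biproduct.mapIso γ)).trans ρ).trans (Retract.ofIso e.symm), ?_⟩
  simp only [Retract.trans_r, H.map_comp]
  exact inferInstanceAs (IsIso (H.map e.hom ≫ H.map ρ.r ≫ H.map (biproduct.mapIso γ).inv))

end MapBiproduct

section TriangularMatrix

variable {D : Type*} [Category D] [Preadditive D]

/-- The endomorphism of `B` which acts as the given endomorphism on a retract `W` of `B` and as the
identity on its complement. -/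
noncomputable def extendEnd {W B : D} (ρ : Retract W B) : End W →* End B where
  toFun u := ρ.r ≫ u ≫ ρ.i + (𝟙 B - ρ.r ≫ ρ.i)
  map_one' := by simp [End.one_def]
  map_mul' u v := by simp [End.mul_def]

lemma extendEnd_comp_r {W B : D} (ρ : Retract W B) (u : End W) :
    extendEnd ρ u ≫ ρ.r = ρ.r ≫ u := by
  simp [extendEnd]

variable {R : Type*} [CommRing R] [Linear R D] [HasFiniteBiproducts D]
  {α : Type*} [LinearOrder α] (F : α ⥤ D) {K : Type} [Fintype K] (ν : K → α)

/-- The endomorphism of `⨁ F.obj (ν x)` whose component from `x` to `y` is the multiple by `M x y`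
of the transition morphism `F.obj (ν x) ⟶ F.obj (ν y)`. It is only meaningful when `M` is block
triangular with respect to `ν`: entries for which there is no transition morphism are discarded. -/
noncomputable def triangularHom (M : Matrix K K R) :
    ⨁ (fun x => F.obj (ν x)) ⟶ ⨁ (fun x => F.obj (ν x)) :=
  biproduct.matrix fun x y => if h : ν x ≤ ν y then M x y • F.map (homOfLE h) else 0

lemma triangularHom_one [DecidableEq K] : triangularHom F ν (1 : Matrix K K R) = 𝟙 _ := by
  ext y x
  by_cases h : x = y
  · subst h
    simp [triangularHom]
  · simp [triangularHom, Matrix.one_apply_ne h, biproduct.ι_π_ne _ h]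

variable {ν}

lemma triangularHom_mul {M M' : Matrix K K R} (hM : M.BlockTriangular ν)
    (hM' : M'.BlockTriangular ν) :
    triangularHom F ν (M * M') = triangularHom F ν M ≫ triangularHom F ν M' := by
  ext y x
  simp only [triangularHom, Category.assoc, biproduct.matrix_π, biproduct.ι_desc,
    biproduct.ι_matrix_assoc, biproduct.lift_desc]
  split_ifs with hxy
  · rw [Matrix.mul_apply, Finset.sum_smul]
    refine Finset.sum_congr rfl fun z _ => ?_
    split_ifs with hxz hzy hzy
    · rw [Linear.smul_comp, Linear.comp_smul, ← F.map_comp, smul_smul]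
      rfl
    · simp [hM' (not_le.1 hzy)]
    · simp [hM (not_le.1 hxz)]
    · simp [hM (not_le.1 hxz)]
  · refine (Finset.sum_eq_zero fun z _ => ?_).symm
    split_ifs with hxz hzy
    · exact absurd (hxz.trans hzy) hxy
    all_goals simp

lemma isIso_triangularHom [DecidableEq K] {M : Matrix K K R} (hM : M.BlockTriangular ν)
    (hu : IsUnit M) : IsIso (triangularHom F ν M) := by
  have := hu.invertible
  have hM' : M⁻¹.BlockTriangular ν := Matrix.blockTriangular_inv_of_blockTriangular hM
  exact ⟨triangularHom F ν M⁻¹, by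
    rw [← triangularHom_mul F hM hM', Matrix.mul_inv_of_invertible, triangularHom_one], by
    rw [← triangularHom_mul F hM' hM, Matrix.inv_mul_of_invertible, triangularHom_one]⟩

lemma exists_iso_biproduct_forall_blockTriangular {C : Type*} [Category C] [Preadditive C]
    [HasFiniteBiproducts C] [Linear R C] (H : D ⥤ C) [H.Additive] [H.Linear R] [DecidableEq K]
    {A : C} (τ : F ⋙ H ≅ (Functor.const α).obj A) {B : D}
    (ρ : Retract (⨁ fun x => F.obj (ν x)) B) [IsIso (H.map ρ.r)] :
    ∃ ψ : H.obj B ≅ ⨁ fun _ : K => A, ∀ M : Matrix K K R, M.BlockTriangular ν →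
      ∃ u : B ⟶ B, (∀ x y, biproduct.ι _ x ≫ ψ.inv ≫ H.map u ≫ ψ.hom ≫ biproduct.π _ y =
        M x y • 𝟙 A) ∧ (IsUnit M → IsIso u) := by
  let θ (x : K) : H.obj (F.obj (ν x)) ≅ A := τ.app (ν x)
  obtain ⟨φ, ι_φ, φ_π⟩ := exists_iso_map_biproduct H θ
  have θ_map {x y : K} (h : ν x ≤ ν y) : H.map (F.map (homOfLE h)) ≫ (θ y).hom = (θ x).hom := by
    simpa [θ] using τ.hom.naturality (homOfLE h)
  refine ⟨asIso (H.map ρ.r) ≪≫ φ, fun M hM => ⟨extendEnd ρ (triangularHom F ν M), fun x y => ?_,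
    fun hu => ?_⟩⟩
  · have hr : H.map (extendEnd ρ (triangularHom F ν M)) ≫ H.map ρ.r =
        H.map ρ.r ≫ H.map (triangularHom F ν M) := by
      rw [← H.map_comp, ← H.map_comp, extendEnd_comp_r]
    simp only [Iso.trans_inv, Iso.trans_hom, asIso_hom, asIso_inv, Category.assoc]
    rw [reassoc_of% ι_φ x, φ_π, reassoc_of% hr, IsIso.inv_hom_id_assoc, ← H.map_comp_assoc,
      ← H.map_comp_assoc]
    simp only [triangularHom, Category.assoc, biproduct.matrix_π, biproduct.ι_desc]
    split_ifs with hxy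
    · rw [H.map_smul, Linear.smul_comp, θ_map hxy, Linear.comp_smul, Iso.inv_hom_id]
    · simp [hM (not_le.1 hxy)]
  · have := isIso_triangularHom F hM hu
    exact (isUnit_iff_isIso _).1 (((isUnit_iff_isIso _).2 this).map (extendEnd ρ))

end TriangularMatrix

section Assembly

open DerivedCategory

variable {C : Type*} [Category C] [Abelian C] [HasDerivedCategory C] {A : C}

lemma nonempty_comp_homologyFunctor_iso_const {J : Type*} [Category J]
    (F : J ⥤ Over ((singleFunctor C 0).obj A))
    (hF : ∀ j, IsIso ((homologyFunctor C 0).map (F.obj j).hom)) (m : ℤ) :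
    Nonempty ((F ⋙ Over.forget _ ⋙ shiftFunctor _ (-m)) ⋙ homologyFunctor C m ≅
      (Functor.const J).obj A) := by
  let σ : shiftFunctor _ (-m) ⋙ homologyFunctor C m ≅ homologyFunctor C 0 :=
    (homologyFunctor C 0).shiftIso (-m) m 0 (neg_add_cancel m)
  let τ : F ⋙ Over.forget _ ⋙ homologyFunctor C 0 ≅
      (Functor.const J).obj ((homologyFunctor C 0).obj ((singleFunctor C 0).obj A)) :=
    NatIso.ofComponents (fun j => @asIso _ _ _ _ _ (hF j)) fun f => by
      simpa using ((homologyFunctor C 0).map_comp _ _).symm.trans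
        (congrArg (homologyFunctor C 0).map (Over.w (F.map f)))
  exact ⟨Functor.isoWhiskerLeft (F ⋙ Over.forget _) σ ≪≫ τ ≪≫
    (Functor.const J).mapIso ((singleFunctorCompHomologyFunctorIso C 0).app A)⟩

variable {k : Type*} [Field k] [Linear k C]

lemma exists_functor_orderDual (hA : ¬IsZero A)
    (h2 : Module.rank k
      ((singleFunctor C 0).obj A ⟶ ((singleFunctor C 0).obj A)⟦(2 : ℤ)⟧) ≤ 1)
    (h3 : ∀ j : ℤ, 3 ≤ j →
      Subsingleton ((singleFunctor C 0).obj A ⟶ ((singleFunctor C 0).obj A)⟦j⟧))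
    {ι : Type*} [Finite ι] [Nonempty ι] {n : ι → ℕ} {X : ι → DerivedCategory C}
    (hX : ∀ i, IsWeakTypeA A (n i) (X i)) (m : ℤ) :
    ∃ G : ℕᵒᵈ ⥤ DerivedCategory C,
      Nonempty (G ⋙ homologyFunctor C m ≅ (Functor.const ℕᵒᵈ).obj A) ∧
      ∀ i (s : ℤ), n i - s = m → Nonempty (G.obj (.toDual (n i)) ≅ (X i)⟦s⟧) := by
  let E := (singleFunctor C 0).obj A
  have h2' : Module.rank k (E ⟶ E⟦(1 : ℤ)⟧⟦(1 : ℤ)⟧) ≤ 1 :=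
    (Linear.homCongr k (Iso.refl E)
      ((shiftFunctorAdd' _ 1 1 (2 : ℤ) one_add_one_eq_two).app E)).rank_eq.symm.trans_le h2
  choose t ht using fun i => (hX i).exists_isTower hA h3
  obtain ⟨i₀, hi₀⟩ := Finite.exists_max n
  obtain ⟨F, hF⟩ := (ht i₀).exists_functor h2' h3
  let F' : ℕᵒᵈ ⥤ Over E := (orderDualEquivalence ℕ).functor ⋙ F
  refine ⟨F' ⋙ Over.forget _ ⋙ shiftFunctor _ (-m),
    nonempty_comp_homologyFunctor_iso_const F' (fun _ => (hF _).isIso_homologyFunctor_map_hom) m,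
    fun i s hs => ?_⟩
  have hFi := hF (n i)
  rw [min_eq_left (hi₀ i)] at hFi
  obtain ⟨e⟩ := hFi.nonempty_iso h2' h3 (ht i)
  exact ⟨(Over.forget _ ⋙ shiftFunctor _ (-m)).mapIso e ≪≫
    ((shiftFunctorAdd' _ (n i : ℤ) (-m) s (by lia)).app (X i)).symm⟩

end Assembly

namespace ThreeCusps

section

variable {k : Type*} [Field k] {C : Type*} [Category C] [Abelian C] [CategoryTheory.Linear k C]
  [HasDerivedCategory C] {A : C}

lemma HomIsLine.rank_le_one {Y : DerivedCategory C} (h : HomIsLine k A Y) :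
    Module.rank k ((DerivedCategory.singleFunctor C 0).obj A ⟶ Y) ≤ 1 := by
  obtain ⟨e, -, he⟩ := h
  refine rank_le_one_iff.2 ⟨e, fun φ => ?_⟩
  obtain ⟨c, rfl⟩ := he φ
  exact ⟨c, by simp [Functor.map_smul]⟩

lemma GoodBase.not_isZero (hA : GoodBase k A) : ¬IsZero A := fun h => by
  have : Subsingleton (A ⟶ A) := ⟨h.eq_of_src⟩
  exact zero_ne_one (Module.finrank_zero_of_subsingleton.symm.trans hA.1)

lemma GoodBase.subsingleton_hom_shift (hA : GoodBase k A) (j : ℤ) (hj : 3 ≤ j) :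
    Subsingleton ((DerivedCategory.singleFunctor C 0).obj A ⟶
      ((DerivedCategory.singleFunctor C 0).obj A)⟦j⟧) := by
  lift j to ℕ using by lia
  exact subsingleton_of_forall_eq 0 (hA.2.2 j (by lia) (by lia))

lemma IsTypeA.isWeakTypeA {n : ℕ} {X : DerivedCategory C} (hX : IsTypeA k A n X) :
    IsWeakTypeA A n X where
  nonempty_homology_iso := hX.1
  isZero_homology := hX.2.1
  subsingleton_hom j h₀ hn := subsingleton_of_forall_eq 0 (hX.2.2.2 j (by lia) (by lia))

theorem stmt6_general (hA : ¬IsZero A)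
    (h2 : Module.rank k ((DerivedCategory.singleFunctor C 0).obj A ⟶
      ((DerivedCategory.singleFunctor C 0).obj A)⟦(2 : ℤ)⟧) ≤ 1)
    (h3 : ∀ j : ℤ, 3 ≤ j → Subsingleton ((DerivedCategory.singleFunctor C 0).obj A ⟶
      ((DerivedCategory.singleFunctor C 0).obj A)⟦j⟧))
    {ι : Type} [Fintype ι] [DecidableEq ι] {n d : ι → ℕ} {s : ι → ℤ} {X : ι → DerivedCategory C}
    (hX : ∀ i, IsWeakTypeA A (n i) (X i)) {B : DerivedCategory C}
    (hB : Nonempty (B ≅ ⨁ fun i => (⨁ fun _ : Fin (d i) => X i)⟦s i⟧)) {smax : ℤ}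
    (hmax1 : ∀ i, (n i : ℤ) - s i ≤ smax) (hmax2 : ∃ i, (n i : ℤ) - s i = smax) :
    ∃ ψ : (DerivedCategory.homologyFunctor C smax).obj B ≅
        ⨁ (fun _ : (Σ j : {i // (n i : ℤ) - s i = smax}, Fin (d j.1)) => A),
      ∀ M : ∀ j₁ j₂ : {i // (n i : ℤ) - s i = smax}, Matrix (Fin (d j₁.1)) (Fin (d j₂.1)) k,
        (∀ j₁ j₂, n j₁.1 < n j₂.1 → M j₁ j₂ = 0) →
        ∃ u : B ⟶ B,
          (∀ x y, biproduct.ι _ x ≫ ψ.inv ≫ (DerivedCategory.homologyFunctor C smax).map u ≫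
            ψ.hom ≫ biproduct.π _ y = M x.1 y.1 x.2 y.2 • 𝟙 A) ∧
          (IsUnit (Matrix.of fun x y : (Σ j : {i // (n i : ℤ) - s i = smax}, Fin (d j.1)) =>
            M x.1 y.1 x.2 y.2) → IsIso u) := by
  let H := DerivedCategory.homologyFunctor C smax
  let K := Σ j : {i // (n i : ℤ) - s i = smax}, Fin (d j.1)
  let Y (x : Σ i, Fin (d i)) : DerivedCategory C := (X x.1)⟦s x.1⟧
  let f : K → Σ i, Fin (d i) := Sigma.map Subtype.val fun _ => id
  have hf : f.Injective := Subtype.val_injective.sigma_map fun _ => Function.injective_id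
  have hY (y) (hy : y ∉ Set.range f) : IsZero (H.obj (Y y)) := by
    have hlt : (n y.1 : ℤ) - s y.1 < smax :=
      (hmax1 y.1).lt_of_ne fun h => hy ⟨⟨⟨y.1, h⟩, y.2⟩, rfl⟩
    exact ((hX y.1).isZero_homology (s y.1 + smax) (.inr (by lia))).of_iso
      (((DerivedCategory.homologyFunctor C 0).shiftIso (s y.1) smax _ rfl).app (X y.1))
  have : Nonempty ι := ⟨hmax2.choose⟩
  obtain ⟨G, ⟨τ⟩, hG⟩ := exists_functor_orderDual hA h2 h3 hX smax
  obtain ⟨e⟩ := hB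
  let e' : B ≅ ⨁ Y :=
    e ≪≫ biproduct.mapIso (fun i => (shiftFunctor _ (s i)).mapBiproduct _) ≪≫
      biproductBiproductIso _ fun i _ => (X i)⟦s i⟧
  obtain ⟨ρ, _⟩ := exists_retract_of_iso_biproduct H e' hf
    (fun x => (hG x.1.1 (s x.1.1) x.1.2).some) hY
  obtain ⟨ψ, hψ⟩ := exists_iso_biproduct_forall_blockTriangular (R := k) G H τ ρ
  refine ⟨ψ, fun M hM => hψ (Matrix.of fun x y => M x.1 y.1 x.2 y.2) fun x y hxy => ?_⟩
  simp [hM x.1 y.1 hxy]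

end

variable (k : Type*) [Field k]
variable {C : Type*} [Category C] [Abelian C] [CategoryTheory.Linear k C]
  [HasDerivedCategory C]

/-- **Lemma 3.5.** Let `{(n_i, d_i, s_i)}` be a finite (nonempty) family with
`n_i, d_i ≥ 1` and `s_i ∈ ℤ`, let `X_i` be objects of type `A_{n_i}` and let
`B = ⊕_i X_i^{⊕ d_i}[s_i]`.  Let `s = max_i (n_i - s_i)` and
`J = {i : n_i - s_i = s}`, so that the decomposition induces an isomorphism
`ψ : H^s(B) ≅ ⊕_{j ∈ J} A^{d_j}`.  Since `Hom(A,A) = k·id`, the endomorphisms of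
`H^s(B)` identify with block matrices `M = (M_{jk})_{j,k ∈ J}` where `M_{jk}` is a
`d_j × d_k` matrix over `k` (recording, entrywise, the components between the various
copies of `A`).  Then (1) every block matrix `M` with `M_{jk} = 0` whenever `n_k > n_j`
is induced, via the functor `H^s` and `ψ`, by an endomorphism of `B`, and (2) every
invertible such block matrix is induced by an automorphism of `B`. -/
theorem stmt6 (A : C) (hA : GoodBase k A)
    (N : ℕ) (hN : 0 < N) (n d : Fin N → ℕ) (s : Fin N → ℤ)
    (hn : ∀ i, 1 ≤ n i) (hd : ∀ i, 1 ≤ d i)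
    (X : Fin N → DerivedCategory C) (hX : ∀ i, IsTypeA k A (n i) (X i))
    (B : DerivedCategory C)
    (hB : Nonempty (B ≅ ⨁ (fun i : Fin N => (⨁ (fun _ : Fin (d i) => X i))⟦s i⟧)))
    (smax : ℤ)
    (hmax1 : ∀ i, (n i : ℤ) - s i ≤ smax)
    (hmax2 : ∃ i, (n i : ℤ) - s i = smax) :
    ∃ ψ : (DerivedCategory.homologyFunctor C smax).obj B ≅
        ⨁ (fun _ : (Σ j : {i : Fin N // (n i : ℤ) - s i = smax}, Fin (d j.1)) => A),
      (∀ M : ∀ j₁ j₂ : {i : Fin N // (n i : ℤ) - s i = smax},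
          Matrix (Fin (d j₁.1)) (Fin (d j₂.1)) k,
        (∀ j₁ j₂, n j₂.1 > n j₁.1 → M j₁ j₂ = 0) →
        ∃ u : B ⟶ B,
          ∀ x y : (Σ j : {i : Fin N // (n i : ℤ) - s i = smax}, Fin (d j.1)),
            biproduct.ι _ x ≫ ψ.inv ≫ (DerivedCategory.homologyFunctor C smax).map u ≫
                ψ.hom ≫ biproduct.π _ y
              = M x.1 y.1 x.2 y.2 • 𝟙 A) ∧
      (∀ M : ∀ j₁ j₂ : {i : Fin N // (n i : ℤ) - s i = smax},
          Matrix (Fin (d j₁.1)) (Fin (d j₂.1)) k,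
        (∀ j₁ j₂, n j₂.1 > n j₁.1 → M j₁ j₂ = 0) →
        IsUnit (Matrix.of
          (fun x y : (Σ j : {i : Fin N // (n i : ℤ) - s i = smax}, Fin (d j.1)) =>
            M x.1 y.1 x.2 y.2)) →
        ∃ u : B ≅ B,
          ∀ x y : (Σ j : {i : Fin N // (n i : ℤ) - s i = smax}, Fin (d j.1)),
            biproduct.ι _ x ≫ ψ.inv ≫ (DerivedCategory.homologyFunctor C smax).map u.hom ≫
                ψ.hom ≫ biproduct.π _ y
              = M x.1 y.1 x.2 y.2 • 𝟙 A) := by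
  obtain ⟨ψ, hψ⟩ := stmt6_general hA.not_isZero hA.2.1.rank_le_one hA.subsingleton_hom_shift
    (fun i => (hX i).isWeakTypeA) hB hmax1 hmax2
  exact ⟨ψ, fun M hM => (hψ M hM).imp fun _ => And.left, fun M hM hM' =>
    have ⟨u, hu, hu'⟩ := hψ M hM
    have := hu' hM'
    ⟨asIso u, hu⟩⟩

end ThreeCusps
end

section
/- For integers 1 ≤ p ≤ q and nonzero complex numbers α, β, the Kronecker (tensor) product J(α,p) ⊗ J(β,q) of the Jordan blocks, a pq × pq complex matrix, is similar to the block-diagonal matrix with Jordan blocks J(αβ, q−p+2i−1) for i = 1,…,p. Equivalently, the endomorphism of ℂ^p ⊗ ℂ^q given by the tensor product of the two Jordan block endomorphisms is conjugate, by a linear isomorphism ℂ^p ⊗ ℂ^q ≅ ⊕_{i=1}^{p} ℂ^{q−p+2i−1}, to the direct sum of the Jordan block endomorphisms J(αβ, q−p+2i−1). In particular, the eigenvalue-1 Jordan block of size 1 occurs in J(α,p) ⊗ J(β,q) with multiplicity 1 if p = q and αβ = 1, and with multiplicity 0 otherwise. (Lemma 9.3, stated via the correspondence between local systems on the circle and their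 monodromy matrices.) -/
open scoped Kronecker Classical

/-- The `r × r` Jordan block with eigenvalue `α`: `α` on the diagonal, `1` just above the
diagonal, `0` elsewhere. -/
def jordanBlock (α : ℂ) (r : ℕ) : Matrix (Fin r) (Fin r) ℂ :=
  fun i j => if (j : ℕ) = (i : ℕ) then α else if (j : ℕ) = (i : ℕ) + 1 then 1 else 0

/-!
`J(α, p)` is multiplication by `α + x` on `ℂ[x] / (x ^ p)`, so `J(α, p) ⊗ J(β, q)` is multiplication
by `(α + x) * (β + y) = α * β + (z + y')` on `ℂ[x, y] / (x ^ p, y ^ q)`, where `z = β * x` and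
`y' = (α + x) * y` are unit multiples of `x` and `y`. Modulo `z + y'` this algebra is spanned by the
`y' ^ d` with `d < p`. Hence, by a dimension count, Jordan chains of `z + y'` of length
`p + q - 1 - 2 * d` headed by elements congruent to `y' ^ d` form a basis.

Such elements come from an integration in characteristic zero. Put `r = p - d`, `M = q - 1 - d`, and
integrate `(-X) ^ d * (X + y') ^ M` `r` times, as a polynomial in `X + y'`. The coefficients of the
result at `X ^ j` vanish for `r ≤ j < p`, those with `j < r` vanish because `y' ^ q = 0`, and
`z ^ p = 0` kills the rest at `X = z`; but the value at `z` is also `(z + y') ^ (M + r)` times a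
nonzero multiple of an element congruent to `y' ^ d`.
-/

open Polynomial
open scoped TensorProduct

section LefschetzPrimitive

variable {A : Type*} [CommRing A] [Algebra ℚ A]

/-- An `r`-fold antiderivative of `(-X) ^ d * (X + y) ^ M` with respect to `X`: expand
`(-X) ^ d = (y - (X + y)) ^ d` binomially and integrate the powers of `X + y`. -/
noncomputable def iteratedPrimitive (y : A) (d M r : ℕ) : A[X] :=
  ∑ k ∈ Finset.range (d + 1),
    ((-1) ^ k * d.choose k / (M + k + r).descFactorial r : ℚ) •
      (C (y ^ (d - k)) * (X + C y) ^ (M + k + r))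

theorem iterate_derivative_iteratedPrimitive (y : A) (d M r : ℕ) :
    derivative^[r] (iteratedPrimitive y d M r) = (-X) ^ d * (X + C y) ^ M := by
  have hexpand : (-X : A[X]) ^ d = (-(X + C y) + C y) ^ d := by congr 1; ring
  rw [hexpand, add_pow, Finset.sum_mul, iteratedPrimitive, iterate_derivative_sum]
  refine Finset.sum_congr rfl fun k _ ↦ ?_
  have hfac : ((M + k + r).descFactorial r : ℚ) ≠ 0 :=
    Nat.cast_ne_zero.mpr (Nat.descFactorial_pos.mpr (by lia)).ne'
  rw [iterate_derivative_smul, iterate_derivative_C_mul, iterate_derivative_X_add_pow,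
    Nat.add_sub_cancel, ← Nat.cast_smul_eq_nsmul ℚ, mul_smul_comm, smul_smul,
    div_mul_cancel₀ _ hfac, neg_pow (X + C y), Algebra.smul_def]
  simp only [map_mul, map_pow, map_neg, map_one, map_natCast, pow_add]
  ring

theorem coeff_iteratedPrimitive_eq_zero_of_lt {y : A} {d M r j : ℕ} (hy : y ^ (M + 1 + d) = 0)
    (hj : j < r) : (iteratedPrimitive y d M r).coeff j = 0 := by
  rw [iteratedPrimitive, finsetSum_coeff]
  refine Finset.sum_eq_zero fun k hk ↦ ?_
  have hk : k ≤ d := Finset.mem_range_succ_iff.mp hk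
  rw [coeff_smul, coeff_C_mul, coeff_X_add_C_pow, ← mul_assoc, ← pow_add,
    pow_eq_zero_of_le (by lia) hy, zero_mul, smul_zero]

theorem coeff_iteratedPrimitive_eq_zero_of_le {y : A} {d M r j : ℕ} (hrj : r ≤ j)
    (hj : j < r + d) : (iteratedPrimitive y d M r).coeff j = 0 := by
  obtain ⟨t, rfl⟩ := Nat.exists_eq_add_of_le' hrj
  have hderiv := congr_arg (coeff · t) (iterate_derivative_iteratedPrimitive y d M r)
  simp only [coeff_iterate_derivative] at hderiv
  rw [neg_pow, ← C_1, ← C_neg, ← C_pow, mul_assoc, coeff_C_mul, coeff_X_pow_mul',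
    if_neg (by lia), mul_zero, ← Nat.cast_smul_eq_nsmul ℚ] at hderiv
  exact (smul_eq_zero.mp hderiv).resolve_left
    (Nat.cast_ne_zero.mpr (Nat.descFactorial_pos.mpr (by lia)).ne')

theorem eval_iteratedPrimitive_eq_zero {z y : A} {d M r : ℕ} (hz : z ^ (r + d) = 0)
    (hy : y ^ (M + 1 + d) = 0) : (iteratedPrimitive y d M r).eval z = 0 := by
  rw [eval_eq_sum_range]
  refine Finset.sum_eq_zero fun j _ ↦ ?_
  obtain hj | hj := le_or_gt (r + d) j
  · rw [pow_eq_zero_of_le hj hz, mul_zero]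
  obtain hjr | hrj := lt_or_ge j r
  · rw [coeff_iteratedPrimitive_eq_zero_of_lt hy hjr, zero_mul]
  · rw [coeff_iteratedPrimitive_eq_zero_of_le hrj hj, zero_mul]

theorem exists_add_pow_mul_pow_add_eq_zero {z y : A} {p q d : ℕ} (hdp : d ≤ p) (hdq : d < q)
    (hz : z ^ p = 0) (hy : y ^ q = 0) :
    ∃ w : A, (z + y) ^ (p + q - 1 - 2 * d) * (y ^ d + (z + y) * w) = 0 := by
  obtain ⟨r, rfl⟩ : ∃ r, p = r + d := ⟨p - d, by lia⟩
  obtain ⟨M, rfl⟩ : ∃ M, q = M + 1 + d := ⟨q - 1 - d, by lia⟩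
  rw [show r + d + (M + 1 + d) - 1 - 2 * d = M + r by lia]
  let a : ℕ → ℚ := fun k ↦ (-1) ^ k * d.choose k / (M + k + r).descFactorial r
  have ha : a 0 ≠ 0 := by simp [a]
  have hsum : ∑ k ∈ Finset.range (d + 1), a k • (y ^ (d - k) * (z + y) ^ (M + k + r)) = 0 := by
    simpa [iteratedPrimitive, eval_finsetSum] using eval_iteratedPrimitive_eq_zero hz hy
  let w : A := ∑ k ∈ Finset.range d, a (k + 1) • (y ^ (d - (k + 1)) * (z + y) ^ k)
  have hfactor : (z + y) ^ (M + r) * (a 0 • y ^ d + (z + y) * w) = 0 := by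
    rw [← hsum, Finset.sum_range_succ', mul_add, add_comm, ← mul_assoc, Finset.mul_sum]
    congr 1
    · refine Finset.sum_congr rfl fun k _ ↦ ?_
      rw [mul_smul_comm]
      ring_nf
    · rw [mul_smul_comm, mul_comm, Nat.sub_zero, Nat.add_zero]
  refine ⟨(a 0)⁻¹ • w, ?_⟩
  rw [← inv_smul_smul₀ ha (y ^ d), mul_smul_comm, ← smul_add, mul_smul_comm, hfactor, smul_zero]

end LefschetzPrimitive

theorem eq_top_of_sup_range_eq_top {R V : Type*} [Semiring R] [AddCommMonoid V] [Module R V]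
    {N : Module.End R V} (hN : IsNilpotent N) {W : Submodule R V} (hW : W ∈ N.invtSubmodule)
    (h : W ⊔ N.range = ⊤) : W = ⊤ := by
  have hpow (k : ℕ) : W ⊔ (N ^ k).range = ⊤ := by
    induction k with
    | zero => simp [Module.End.one_eq_id]
    | succ k ih =>
      have hmap : W.map (N ^ k) ≤ W := Submodule.map_le_iff_le_comap.mpr fun w hw ↦
        Module.End.pow_apply_mem_of_forall_mem k hW w hw
      rw [← top_le_iff, ← ih, LinearMap.range_eq_map, ← h, Submodule.map_sup, ← sup_assoc,
        sup_eq_left.mpr hmap, LinearMap.range_eq_map N, ← Submodule.map_comp,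
        ← Module.End.mul_eq_comp, ← pow_succ, LinearMap.range_eq_map]
  obtain ⟨k, hk⟩ := hN
  simpa [hk] using hpow k

section JordanChain

variable {R V : Type*} [Semiring R] [AddCommMonoid V] [Module R V]

/-- The Jordan chain of length `m` generated by `v`: the vectors `N ^ (m - 1) v, …, N v, v`, in
this order, so that (when `N ^ m v = 0`) the operator `N` moves each of them one place down. -/
def jordanChain (N : Module.End R V) (m : ℕ) (v : V) : Fin m → V :=
  fun k ↦ (N ^ (k.rev : ℕ)) v

theorem apply_jordanChain_zero {N : Module.End R V} {m : ℕ} {v : V} (hv : (N ^ (m + 1)) v = 0) :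
    N (jordanChain N (m + 1) v 0) = 0 := by
  rw [← hv, pow_succ', Module.End.mul_apply]
  simp [jordanChain]

theorem apply_jordanChain_succ (N : Module.End R V) {m : ℕ} (v : V) (k : Fin m) :
    N (jordanChain N (m + 1) v k.succ) = jordanChain N (m + 1) v k.castSucc := by
  rw [jordanChain, jordanChain, ← Module.End.mul_apply, ← pow_succ', Fin.rev_castSucc, Fin.rev_succ]
  simp

theorem apply_jordanChain_mem_span {N : Module.End R V} {m : ℕ} {v : V} (hv : (N ^ m) v = 0)
    (k : Fin m) : N (jordanChain N m v k) ∈ Submodule.span R (Set.range (jordanChain N m v)) := by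
  obtain _ | m := m
  · exact k.elim0
  cases k using Fin.cases with
  | zero => rw [apply_jordanChain_zero hv]; exact Submodule.zero_mem _
  | succ k => rw [apply_jordanChain_succ]; exact Submodule.subset_span ⟨_, rfl⟩

theorem mem_span_jordanChain {N : Module.End R V} {m : ℕ} {v : V} (hv : (N ^ m) v = 0) :
    v ∈ Submodule.span R (Set.range (jordanChain N m v)) := by
  obtain _ | m := m
  · obtain rfl : v = 0 := hv
    exact Submodule.zero_mem _
  · exact Submodule.subset_span ⟨Fin.last m, by simp [jordanChain]⟩

end JordanChain

theorem algebraMap_add_apply_jordanChain {V : Type*} [AddCommGroup V] [Module ℂ V]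
    {N : Module.End ℂ V} {m : ℕ} {v : V} (hv : (N ^ m) v = 0) (γ : ℂ) (k : Fin m) :
    (algebraMap ℂ (Module.End ℂ V) γ + N) (jordanChain N m v k) =
      ∑ l, jordanBlock γ m l k • jordanChain N m v l := by
  obtain _ | m := m
  · exact k.elim0
  have hblock (l : Fin (m + 1)) : jordanBlock γ (m + 1) l k • jordanChain N (m + 1) v l =
      (if l = k then γ • jordanChain N (m + 1) v l else 0) +
        if (k : ℕ) = l + 1 then jordanChain N (m + 1) v l else 0 := by
    rcases eq_or_ne l k with rfl | hlk
    · simp [jordanBlock]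
    · simp [jordanBlock, hlk, Ne.symm (Fin.val_ne_of_ne hlk)]
  simp only [hblock, Finset.sum_add_distrib, Finset.sum_ite_eq', Finset.mem_univ, if_true,
    LinearMap.add_apply, Module.algebraMap_end_apply, add_right_inj]
  cases k using Fin.cases with
  | zero => simp [apply_jordanChain_zero hv]
  | succ k =>
    have hl (l : Fin (m + 1)) : (k.succ : ℕ) = l + 1 ↔ l = k.castSucc := by
      simp [Fin.ext_iff, eq_comm]
    simp only [apply_jordanChain_succ, hl, Finset.sum_ite_eq', Finset.mem_univ, if_true]

theorem toMatrix_eq_blockDiagonal'_jordanBlock {V ι : Type*} [AddCommGroup V] [Module ℂ V]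
    [Fintype ι] [DecidableEq ι] {N : Module.End ℂ V} {m : ι → ℕ} {v : ι → V}
    (hv : ∀ i, (N ^ m i) (v i) = 0) (b : Module.Basis (Σ i, Fin (m i)) ℂ V)
    (hb : ∀ i k, b ⟨i, k⟩ = jordanChain N (m i) (v i) k) (γ : ℂ) :
    LinearMap.toMatrix b b (algebraMap ℂ (Module.End ℂ V) γ + N) =
      Matrix.blockDiagonal' fun i ↦ jordanBlock γ (m i) := by
  rw [← LinearEquiv.eq_symm_apply, LinearMap.toMatrix_symm]
  refine b.ext fun ⟨i, k⟩ ↦ ?_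
  rw [Matrix.toLin_self, Fintype.sum_sigma, Finset.sum_eq_single i]
  · simp only [Matrix.blockDiagonal'_apply_eq, hb]
    exact algebraMap_add_apply_jordanChain (hv i) γ k
  · intro j _ hj
    exact Finset.sum_eq_zero fun l _ ↦ by
      rw [Matrix.blockDiagonal'_apply_ne _ _ _ hj, zero_smul]
  · simp

theorem toMatrix_eq_jordanBlock {V : Type*} [AddCommGroup V] [Module ℂ V] {N : Module.End ℂ V}
    {m : ℕ} {v : V} (hv : (N ^ m) v = 0) (b : Module.Basis (Fin m) ℂ V)
    (hb : ∀ k, b k = jordanChain N m v k) (γ : ℂ) :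
    LinearMap.toMatrix b b (algebraMap ℂ (Module.End ℂ V) γ + N) = jordanBlock γ m := by
  rw [← LinearEquiv.eq_symm_apply, LinearMap.toMatrix_symm]
  refine b.ext fun k ↦ ?_
  rw [Matrix.toLin_self]
  simp only [hb]
  exact algebraMap_add_apply_jordanChain hv γ k

theorem exists_basis_jordanChain {K V ι : Type*} [Field K] [AddCommGroup V] [Module K V]
    [Module.Finite K V] [Fintype ι] {N : Module.End K V} (hN : IsNilpotent N) {m : ι → ℕ}
    {v : ι → V} (hv : ∀ i, (N ^ m i) (v i) = 0)
    (hspan : Submodule.span K (Set.range v) ⊔ N.range = ⊤)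
    (hdim : ∑ i, m i = Module.finrank K V) :
    ∃ b : Module.Basis (Σ i, Fin (m i)) K V,
      ∀ i k, b ⟨i, k⟩ = jordanChain N (m i) (v i) k := by
  let c (x : Σ i, Fin (m i)) : V := jordanChain N (m x.1) (v x.1) x.2
  have hchain (i : ι) : Submodule.span K (Set.range (jordanChain N (m i) (v i))) ≤
      Submodule.span K (Set.range c) :=
    Submodule.span_mono (Set.range_subset_iff.mpr fun k ↦ ⟨⟨i, k⟩, rfl⟩)
  have hinvt : Submodule.span K (Set.range c) ∈ N.invtSubmodule :=
    Submodule.span_le.mpr (Set.range_subset_iff.mpr fun x ↦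
      hchain x.1 (apply_jordanChain_mem_span (hv x.1) x.2))
  have hvc : Submodule.span K (Set.range v) ≤ Submodule.span K (Set.range c) :=
    Submodule.span_le.mpr (Set.range_subset_iff.mpr fun i ↦ hchain i (mem_span_jordanChain (hv i)))
  have htop : Submodule.span K (Set.range c) = ⊤ :=
    eq_top_of_sup_range_eq_top hN hinvt (top_le_iff.mp (hspan.ge.trans (sup_le_sup_right hvc _)))
  exact ⟨basisOfTopLeSpanOfCardEqFinrank c htop.ge (by simpa using hdim), by simp [c]⟩

theorem span_pow_sup_range_eq_top {R A : Type*} [CommRing R] [CommRing A] [Algebra R A]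
    {z y : A} (hy : IsNilpotent y)
    (hres : ∀ g : A, ∃ c : R, g - algebraMap R A c ∈ Ideal.span {z, y}) :
    Submodule.span R (Set.range (y ^ · : ℕ → A)) ⊔ (Algebra.lmul R A (z + y)).range = ⊤ := by
  refine eq_top_of_sup_range_eq_top (hy.map (Algebra.lmul R A))
    (Module.End.invtSubmodule.sup_mem ?_ ?_) (eq_top_iff.mpr fun g _ ↦ ?_)
  · refine Submodule.span_le.mpr (Set.range_subset_iff.mpr fun d ↦ ?_)
    exact Submodule.subset_span ⟨d + 1, pow_succ' y d⟩
  · rintro _ ⟨g, rfl⟩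
    exact ⟨y * g, mul_left_comm _ _ _⟩
  · obtain ⟨c, hc⟩ := hres g
    obtain ⟨h, k, hhk⟩ := Ideal.mem_span_pair.mp hc
    have hg : g = c • y ^ 0 + (z + y) * h + y * (k - h) := by
      rw [Algebra.smul_def]
      linear_combination -hhk
    rw [hg]
    exact Submodule.add_mem_sup
      (Submodule.add_mem_sup (Submodule.smul_mem _ c (Submodule.subset_span ⟨0, rfl⟩)) ⟨h, rfl⟩)
      ⟨k - h, rfl⟩

theorem span_pow_add_mul_sup_range_eq_top {R A : Type*} [CommRing R] [CommRing A] [Algebra R A]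
    {z y : A} {p : ℕ} (hz : z ^ p = 0) (hy : IsNilpotent y)
    (hres : ∀ g : A, ∃ c : R, g - algebraMap R A c ∈ Ideal.span {z, y}) (w : Fin p → A) :
    Submodule.span R (Set.range fun i : Fin p ↦ y ^ (i.rev : ℕ) + (z + y) * w i) ⊔
      (Algebra.lmul R A (z + y)).range = ⊤ := by
  rw [← top_le_iff, ← span_pow_sup_range_eq_top hy hres]
  refine sup_le (Submodule.span_le.mpr (Set.range_subset_iff.mpr fun d ↦ ?_)) le_sup_right
  obtain hd | hd := lt_or_ge d p
  · have hsplit : y ^ d = y ^ d + (z + y) * w (Fin.rev ⟨d, hd⟩) +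
        (z + y) * -w (Fin.rev ⟨d, hd⟩) := by ring
    change y ^ d ∈ _
    rw [hsplit]
    exact Submodule.add_mem_sup
      (Submodule.subset_span ⟨Fin.rev ⟨d, hd⟩, by simp only [Fin.rev_rev]⟩) ⟨_, rfl⟩
  · have hdvd : z + y ∣ y ^ p := by
      have h := sub_dvd_pow_sub_pow y (-z) p
      rwa [neg_pow, hz, mul_zero, sub_zero, sub_neg_eq_add, add_comm] at h
    obtain ⟨g, hg⟩ := hdvd.trans (pow_dvd_pow y hd)
    exact Submodule.mem_sup_right ⟨g, hg.symm⟩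

theorem sum_sub_add_two_mul_add_one {p q : ℕ} (hpq : p ≤ q) :
    ∑ i : Fin p, (q - p + 2 * (i : ℕ) + 1) = p * q := by
  obtain ⟨s, rfl⟩ := Nat.exists_eq_add_of_le hpq
  rw [Nat.add_sub_cancel_left, Fin.sum_univ_eq_sum_range (s + 2 * · + 1)]
  clear hpq
  induction p with
  | zero => simp
  | succ p ih => rw [Finset.sum_range_succ, ih]; ring

theorem exists_basis_leftMulMatrix_add {A : Type*} [CommRing A] [Algebra ℂ A] [Module.Finite ℂ A]
    {z y : A} {p q : ℕ} (hpq : p ≤ q) (hz : z ^ p = 0) (hy : y ^ q = 0)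
    (hres : ∀ g : A, ∃ c : ℂ, g - algebraMap ℂ A c ∈ Ideal.span {z, y})
    (hdim : Module.finrank ℂ A = p * q) (γ : ℂ) :
    ∃ b : Module.Basis (Σ i : Fin p, Fin (q - p + 2 * (i : ℕ) + 1)) ℂ A,
      Algebra.leftMulMatrix b (algebraMap ℂ A γ + (z + y)) =
        Matrix.blockDiagonal' fun i : Fin p ↦ jordanBlock γ (q - p + 2 * (i : ℕ) + 1) := by
  let : Algebra ℚ A := Algebra.compHom A (algebraMap ℚ ℂ)
  have hprimitive (i : Fin p) : ∃ w : A,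
      (z + y) ^ (q - p + 2 * (i : ℕ) + 1) * (y ^ (i.rev : ℕ) + (z + y) * w) = 0 := by
    have hsize : q - p + 2 * (i : ℕ) + 1 = p + q - 1 - 2 * (i.rev : ℕ) := by
      rw [Fin.val_rev]
      lia
    exact hsize ▸
      exists_add_pow_mul_pow_add_eq_zero i.rev.isLt.le (i.rev.isLt.trans_le hpq) hz hy
  choose w hw using hprimitive
  have hnil : IsNilpotent (Algebra.lmul ℂ A (z + y)) :=
    ((Commute.all z y).isNilpotent_add ⟨p, hz⟩ ⟨q, hy⟩).map _
  have hann (i : Fin p) : (Algebra.lmul ℂ A (z + y) ^ (q - p + 2 * (i : ℕ) + 1))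
      (y ^ (i.rev : ℕ) + (z + y) * w i) = 0 := by
    rw [← map_pow]
    exact hw i
  obtain ⟨b, hb⟩ := exists_basis_jordanChain hnil hann
    (span_pow_add_mul_sup_range_eq_top hz ⟨q, hy⟩ hres w)
    ((sum_sub_add_two_mul_add_one hpq).trans hdim.symm)
  refine ⟨b, ?_⟩
  rw [Algebra.leftMulMatrix_apply, map_add, AlgHom.commutes]
  exact toMatrix_eq_blockDiagonal'_jordanBlock hann b hb γ

theorem exists_basis_leftMulMatrix_mul {A : Type*} [CommRing A] [Algebra ℂ A] [Module.Finite ℂ A]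
    {x y : A} {p q : ℕ} (hpq : p ≤ q) (hx : x ^ p = 0) (hy : y ^ q = 0)
    (hres : ∀ g : A, ∃ c : ℂ, g - algebraMap ℂ A c ∈ Ideal.span {x, y})
    (hdim : Module.finrank ℂ A = p * q) {α β : ℂ} (hα : α ≠ 0) (hβ : β ≠ 0) :
    ∃ b : Module.Basis (Σ i : Fin p, Fin (q - p + 2 * (i : ℕ) + 1)) ℂ A,
      Algebra.leftMulMatrix b ((algebraMap ℂ A α + x) * (algebraMap ℂ A β + y)) =
        Matrix.blockDiagonal' fun i : Fin p ↦ jordanBlock (α * β) (q - p + 2 * (i : ℕ) + 1) := by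
  have hβu : IsUnit (algebraMap ℂ A β) := (IsUnit.mk0 β hβ).map _
  have hαu : IsUnit (algebraMap ℂ A α + x) :=
    IsNilpotent.isUnit_add_left_of_commute ⟨p, hx⟩ ((IsUnit.mk0 α hα).map _) (.all _ _)
  have hspan : Ideal.span {algebraMap ℂ A β * x, (algebraMap ℂ A α + x) * y} =
      Ideal.span {x, y} := by
    simp only [Ideal.span_insert, Ideal.span_singleton_mul_left_unit hβu,
      Ideal.span_singleton_mul_left_unit hαu]
  have hexpand : (algebraMap ℂ A α + x) * (algebraMap ℂ A β + y) =
      algebraMap ℂ A (α * β) + (algebraMap ℂ A β * x + (algebraMap ℂ A α + x) * y) := by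
    rw [map_mul]
    ring
  rw [hexpand]
  exact exists_basis_leftMulMatrix_add hpq (by rw [mul_pow, hx, mul_zero])
    (by rw [mul_pow, hy, mul_zero]) (hspan ▸ hres) hdim _

theorem exists_toMatrix_eq_conj_reindex {R V ι κ : Type*} [CommRing R] [Nontrivial R]
    [AddCommGroup V] [Module R V] [Fintype ι] [DecidableEq ι] [Fintype κ] [DecidableEq κ]
    (b : Module.Basis ι R V) (c : Module.Basis κ R V) (T : Module.End R V) :
    ∃ (e : ι ≃ κ) (P : Matrix ι ι R) (_ : Invertible P),
      LinearMap.toMatrix b b T =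
        P * Matrix.reindex e.symm e.symm (LinearMap.toMatrix c c T) * ⅟P := by
  let e := b.indexEquiv c
  let c' := c.reindex e.symm
  have hc' : LinearMap.toMatrix c' c' T =
      Matrix.reindex e.symm e.symm (LinearMap.toMatrix c c T) := by
    ext i j
    simp [LinearMap.toMatrix_apply, c']
  let := b.invertibleToMatrix c'
  refine ⟨e, b.toMatrix c', this, ?_⟩
  rw [← hc', invOf_eq_right_inv (b.toMatrix_mul_toMatrix_flip c'),
    basis_toMatrix_mul_linearMap_toMatrix_mul_basis_toMatrix]

theorem root_X_pow_pow_eq_zero (R : Type*) [CommRing R] (p : ℕ) :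
    AdjoinRoot.root (X ^ p : R[X]) ^ p = 0 := by
  simpa using AdjoinRoot.eval₂_root (X ^ p : R[X])

theorem sub_algebraMap_mem_span_root {R : Type*} [CommRing R] {p : ℕ}
    (g : AdjoinRoot (X ^ p : R[X])) :
    ∃ c : R, g - algebraMap R _ c ∈ Ideal.span {AdjoinRoot.root (X ^ p : R[X])} := by
  obtain ⟨f, rfl⟩ := AdjoinRoot.mk_surjective g
  refine ⟨f.coeff 0, Ideal.mem_span_singleton.mpr ?_⟩
  have h := map_dvd (AdjoinRoot.mk (X ^ p)) (X_dvd_sub_C (p := f))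
  rwa [map_sub, AdjoinRoot.mk_X, AdjoinRoot.mk_C] at h

theorem exists_basis_leftMulMatrix_root (p : ℕ) (γ : ℂ) :
    ∃ b : Module.Basis (Fin p) ℂ (AdjoinRoot (X ^ p : ℂ[X])),
      Algebra.leftMulMatrix b (algebraMap ℂ _ γ + AdjoinRoot.root _) = jordanBlock γ p := by
  let N := Algebra.lmul ℂ (AdjoinRoot (X ^ p : ℂ[X])) (AdjoinRoot.root _)
  have hN (k : ℕ) : (N ^ k) 1 = AdjoinRoot.root _ ^ k := by
    rw [← map_pow]
    exact mul_one _
  let pb := AdjoinRoot.powerBasis' (monic_X_pow (R := ℂ) p)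
  have hdim : pb.dim = p := by simp [pb]
  let b := pb.basis.reindex ((finCongr hdim).trans Fin.revPerm)
  have hb (k : Fin p) : b k = jordanChain N p 1 k := by
    rw [jordanChain, hN]
    simp [b, pb]
  refine ⟨b, ?_⟩
  rw [Algebra.leftMulMatrix_apply, map_add, AlgHom.commutes]
  exact toMatrix_eq_jordanBlock ((hN p).trans (root_X_pow_pow_eq_zero ℂ p)) b hb γ

section TensorProduct

variable {R S T : Type*} [CommRing R] [CommRing S] [CommRing T] [Algebra R S] [Algebra R T]

theorem leftMulMatrix_tensorProduct_tmul {ι κ : Type*} [Fintype ι] [DecidableEq ι] [Fintype κ]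
    [DecidableEq κ] (b : Module.Basis ι R S) (c : Module.Basis κ R T) (s : S) (t : T) :
    Algebra.leftMulMatrix (b.tensorProduct c) (s ⊗ₜ[R] t) =
      Algebra.leftMulMatrix b s ⊗ₖ Algebra.leftMulMatrix c t := by
  simp only [Algebra.leftMulMatrix_apply, ← TensorProduct.toMatrix_map]
  congr 1
  ext
  simp

theorem sub_algebraMap_mem_span_tmul {x : S} {y : T}
    (hx : ∀ g : S, ∃ c : R, g - algebraMap R S c ∈ Ideal.span {x})
    (hy : ∀ g : T, ∃ c : R, g - algebraMap R T c ∈ Ideal.span {y}) (g : S ⊗[R] T) :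
    ∃ c : R, g - algebraMap R (S ⊗[R] T) c ∈ Ideal.span {x ⊗ₜ[R] 1, 1 ⊗ₜ[R] y} := by
  induction g with
  | zero => exact ⟨0, by simp⟩
  | add g g' hg hg' =>
    obtain ⟨c, hc⟩ := hg
    obtain ⟨c', hc'⟩ := hg'
    exact ⟨c + c', by rw [map_add, add_sub_add_comm]; exact Ideal.add_mem _ hc hc'⟩
  | tmul s t =>
    obtain ⟨c, hc⟩ := hx s
    obtain ⟨c', hc'⟩ := hy t
    obtain ⟨h, hh⟩ := Ideal.mem_span_singleton'.mp hc
    obtain ⟨h', hh'⟩ := Ideal.mem_span_singleton'.mp hc'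
    refine ⟨c * c', Ideal.mem_span_pair.mpr ⟨h ⊗ₜ t, algebraMap R S c ⊗ₜ h', ?_⟩⟩
    have hcc : algebraMap R (S ⊗[R] T) (c * c') = algebraMap R S c ⊗ₜ algebraMap R T c' := by
      rw [map_mul, Algebra.TensorProduct.algebraMap_apply, Algebra.TensorProduct.algebraMap_apply',
        Algebra.TensorProduct.tmul_mul_tmul, mul_one, one_mul]
    simp only [Algebra.TensorProduct.tmul_mul_tmul, mul_one, hh, hh', hcc, TensorProduct.sub_tmul,
      TensorProduct.tmul_sub]
    abel

end TensorProduct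

theorem kronecker_jordanBlock_similar {p q : ℕ} (hpq : p ≤ q) {α β : ℂ} (hα : α ≠ 0)
    (hβ : β ≠ 0) :
    ∃ (e : (Fin p × Fin q) ≃ (Σ i : Fin p, Fin (q - p + 2 * (i : ℕ) + 1)))
      (P : Matrix (Fin p × Fin q) (Fin p × Fin q) ℂ) (_ : Invertible P),
      jordanBlock α p ⊗ₖ jordanBlock β q =
        P * (Matrix.reindex e.symm e.symm
          (Matrix.blockDiagonal'
            (fun i : Fin p => jordanBlock (α * β) (q - p + 2 * (i : ℕ) + 1)))) * ⅟P := by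
  obtain ⟨b, hb⟩ := exists_basis_leftMulMatrix_root p α
  obtain ⟨c, hc⟩ := exists_basis_leftMulMatrix_root q β
  let S := AdjoinRoot (X ^ p : ℂ[X])
  let T := AdjoinRoot (X ^ q : ℂ[X])
  let bc := b.tensorProduct c
  let x : S ⊗[ℂ] T := AdjoinRoot.root _ ⊗ₜ 1
  let y : S ⊗[ℂ] T := 1 ⊗ₜ AdjoinRoot.root _
  have hx : x ^ p = 0 := by
    rw [Algebra.TensorProduct.tmul_pow, root_X_pow_pow_eq_zero, TensorProduct.zero_tmul]
  have hy : y ^ q = 0 := by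
    rw [Algebra.TensorProduct.tmul_pow, root_X_pow_pow_eq_zero, TensorProduct.tmul_zero]
  have hfactor : (algebraMap ℂ (S ⊗[ℂ] T) α + x) * (algebraMap ℂ (S ⊗[ℂ] T) β + y) =
      (algebraMap ℂ S α + AdjoinRoot.root _) ⊗ₜ (algebraMap ℂ T β + AdjoinRoot.root _) := by
    rw [Algebra.TensorProduct.algebraMap_apply, Algebra.TensorProduct.algebraMap_apply',
      ← TensorProduct.add_tmul, ← TensorProduct.tmul_add, Algebra.TensorProduct.tmul_mul_tmul,
      mul_one, one_mul]
  have : Module.Finite ℂ (S ⊗[ℂ] T) := .of_basis bc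
  obtain ⟨d, hd⟩ := exists_basis_leftMulMatrix_mul hpq hx hy
    (sub_algebraMap_mem_span_tmul sub_algebraMap_mem_span_root sub_algebraMap_mem_span_root)
    ((Module.finrank_eq_card_basis bc).trans (by simp)) hα hβ
  rw [← hd, ← hb, ← hc, ← leftMulMatrix_tensorProduct_tmul, hfactor]
  exact exists_toMatrix_eq_conj_reindex bc d _

theorem count_jordanType {p q : ℕ} (hp : 1 ≤ p) (hpq : p ≤ q) {R : Type*} (γ δ : R) :
    Multiset.count (δ, 1)
        (Multiset.map (fun i : Fin p ↦ (γ, q - p + 2 * (i : ℕ) + 1)) Finset.univ.val) =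
      if p = q ∧ γ = δ then 1 else 0 := by
  have hinj : Function.Injective fun i : Fin p ↦ (γ, q - p + 2 * (i : ℕ) + 1) := fun i j hij ↦
    Fin.ext (by simpa using hij)
  rw [Multiset.count_eq_of_nodup (Finset.univ.nodup.map hinj)]
  refine if_congr ?_ rfl rfl
  simp only [Multiset.mem_map, Finset.mem_val, Finset.mem_univ, true_and, Prod.mk.injEq]
  constructor
  · rintro ⟨i, hγ, hi⟩
    exact ⟨by lia, hγ⟩
  · rintro ⟨rfl, hγ⟩
    exact ⟨⟨0, hp⟩, hγ, by simp⟩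

/-- **Lemma 9.3.** For integers `1 ≤ p ≤ q` and nonzero complex numbers `α`, `β`, the
Kronecker (tensor) product `J(α,p) ⊗ J(β,q)` of Jordan blocks is similar to the
block-diagonal matrix with Jordan blocks `J(αβ, q - p + 2i - 1)` for `i = 1, …, p`
(below, `i : Fin p` runs over `0, …, p-1`, and the `i`-th block has size
`q - p + 2i + 1 = q - p + 2(i+1) - 1`).  In particular, the eigenvalue-`1` Jordan block
of size `1` occurs in this decomposition with multiplicity `1` if `p = q` and `αβ = 1`,
and with multiplicity `0` otherwise. -/
theorem three_cusps_stmt7 (p q : ℕ) (hp : 1 ≤ p) (hpq : p ≤ q)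
    (α β : ℂ) (hα : α ≠ 0) (hβ : β ≠ 0) :
    (∃ (e : (Fin p × Fin q) ≃ (Σ i : Fin p, Fin (q - p + 2 * (i : ℕ) + 1)))
        (P : Matrix (Fin p × Fin q) (Fin p × Fin q) ℂ) (_ : Invertible P),
      jordanBlock α p ⊗ₖ jordanBlock β q =
        P * (Matrix.reindex e.symm e.symm
          (Matrix.blockDiagonal'
            (fun i : Fin p => jordanBlock (α * β) (q - p + 2 * (i : ℕ) + 1)))) * ⅟P) ∧
    Multiset.count ((1 : ℂ), (1 : ℕ))
        (Multiset.map (fun i : Fin p => (α * β, q - p + 2 * (i : ℕ) + 1))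
          (Finset.univ.val)) =
      (if p = q ∧ α * β = 1 then 1 else 0) := by
  exact ⟨kronecker_jordanBlock_similar hpq hα hβ, count_jordanType hp hpq (α * β) 1⟩
end
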